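/- arXiv:0906.5491 — 7 statements merged into one kernel-verified Lean document; each statement's English description precedes it below -/
import Mathlib

section
/- Let G = ⟨x, y | x y² x⁻¹ = y³⟩ and z = y⁴. Then the relation module M(G,{x,z}) cannot be generated by a single element as a ℤG-module. -/
/-- The single relator `x y² x⁻¹ y⁻³` in the free group on two generators. -/
def bsRels : Set (FreeGroup (Fin 2)) :=
  {FreeGroup.of 0 * FreeGroup.of 1 ^ 2 * (FreeGroup.of 0)⁻¹ * (FreeGroup.of 1 ^ 3)⁻¹}

/-- The Baumslag–Solitar group `G = ⟨x, y | x y² x⁻¹ = y³⟩`. -/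
abbrev BSGroup := PresentedGroup bsRels

/-- `x ∈ G`. -/
def bsX : BSGroup := PresentedGroup.of 0

/-- `y ∈ G`. -/
def bsY : BSGroup := PresentedGroup.of 1

/-- The epimorphism `F(a,b) → G`, `a ↦ x`, `b ↦ z = y⁴`. -/
def bsPi : FreeGroup (Fin 2) →* BSGroup :=
  FreeGroup.lift (fun i => if i = 0 then bsX else bsY ^ 4)

open Complex

abbrev BV := ℤ → ℂ → ℂ

noncomputable def bX : BV ≃ₗ[ℂ] BV where
  toFun u n s := u (n-1) s
  invFun u n s := u (n+1) s
  map_add' _ _ := rfl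
  map_smul' _ _ := rfl
  left_inv u := by ext n s; simp
  right_inv u := by ext n s; simp

noncomputable def bY : BV ≃ₗ[ℂ] BV where
  toFun u n s := exp ((2/3)^n * s) * u n s
  invFun u n s := exp (-((2/3)^n * s)) * u n s
  map_add' _ _ := by ext n s; simp [mul_add]
  map_smul' _ _ := by ext n s; simp; ring
  left_inv u := by ext n s; simp [← mul_assoc, ← exp_add]
  right_inv u := by ext n s; simp [← mul_assoc, ← exp_add]

lemma bX_apply (u n s) : bX u n s = u (n-1) s := rfl
lemma bY_apply (u n s) : bY u n s = exp ((2/3)^n * s) * u n s := rfl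
lemma bXi_apply (u n s) : bX⁻¹ u n s = u (n+1) s := rfl

lemma bYpow_apply (k : ℕ) (u n s) : (bY^k) u n s = exp (k * ((2/3)^n * s)) * u n s := by
  induction k generalizing u with
  | zero => simp
  | succ k ih =>
    rw [pow_succ, LinearEquiv.mul_apply, ih, bY_apply, ← mul_assoc, ← exp_add]
    congr 2; push_cast; ring

lemma bYpowi_apply (k : ℕ) (u n s) : (bY^k)⁻¹ u n s = exp (-(k * ((2/3)^n * s))) * u n s := by
  obtain ⟨w, rfl⟩ : ∃ w, u = (bY^k) w := ⟨(bY^k)⁻¹ u, by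
    rw [← LinearEquiv.mul_apply]; simp⟩
  rw [← LinearEquiv.mul_apply, inv_mul_cancel, bYpow_apply, ← mul_assoc, ← exp_add]
  simp

noncomputable def bRho : BSGroup →* (BV ≃ₗ[ℂ] BV) :=
  PresentedGroup.toGroup (f := fun i => if i = 0 then bX else bY) (by
    intro r hr
    rw [bsRels, Set.mem_singleton_iff] at hr
    subst hr
    simp only [map_mul, map_inv, map_pow, FreeGroup.lift_apply_of]
    rw [mul_inv_eq_one, mul_inv_eq_iff_eq_mul]
    simp only [if_true, one_ne_zero, if_false]
    ext u n s
    simp only [LinearEquiv.mul_apply, bX_apply, bYpow_apply]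
    congr 2
    rw [zpow_sub_one₀ (by norm_num)]
    push_cast; ring)

lemma bRho_x : bRho bsX = bX := by
  simp [bRho, bsX]
lemma bRho_y : bRho bsY = bY := by
  simp [bRho, bsY]
lemma bsPi_0 : bsPi (FreeGroup.of 0) = bsX := by simp [bsPi]
lemma bsPi_1 : bsPi (FreeGroup.of 1) = bsY^4 := by simp [bsPi]

noncomputable def bE : BV := fun n _ => if n = 0 then 1 else 0

noncomputable def bA : Equiv.Perm BV := (Equiv.addRight bE) * bX.toEquiv
noncomputable def bB : Equiv.Perm BV := (bY^4).toEquiv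

noncomputable def bTau : FreeGroup (Fin 2) →* Equiv.Perm BV :=
  FreeGroup.lift (fun i => if i = 0 then bA else bB)

lemma bTau_a (u) : bTau (FreeGroup.of 0) u = bX u + bE := by
  simp [bTau, bA]
lemma bTau_b (u) : bTau (FreeGroup.of 1) u = (bY^4) u := by
  simp [bTau, bB]
lemma bTau_ai (u) : (bTau (FreeGroup.of 0))⁻¹ u = bX⁻¹ (u - bE) := by
  rw [Equiv.Perm.inv_eq_iff_eq, bTau_a, ← LinearEquiv.mul_apply]; simp
lemma bTau_bi (u) : (bTau (FreeGroup.of 1))⁻¹ u = (bY^4)⁻¹ u := by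
  rw [Equiv.Perm.inv_eq_iff_eq, bTau_b, ← LinearEquiv.mul_apply]; simp

noncomputable def bR : FreeGroup (Fin 2) →* (BV ≃ₗ[ℂ] BV) := bRho.comp bsPi
lemma bR_a : bR (FreeGroup.of 0) = bX := by rw [bR, MonoidHom.comp_apply, bsPi_0, bRho_x]
lemma bR_b : bR (FreeGroup.of 1) = bY^4 := by rw [bR, MonoidHom.comp_apply, bsPi_1, map_pow, bRho_y]

lemma perm_aux {α : Type*} (p : Equiv.Perm α) (u : α) : p (p⁻¹ u) = u := by
  rw [← Equiv.Perm.mul_apply]; simp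

lemma gen_ind {P : FreeGroup (Fin 2) → Prop} (h1 : P 1) (ha : P (FreeGroup.of 0))
    (hb : P (FreeGroup.of 1)) (hi : ∀ f, P f → P f⁻¹) (hm : ∀ f g, P f → P g → P (f * g)) :
    ∀ f, P f := by
  have h : ∀ i : Fin 2, P (FreeGroup.of i) := by
    intro i; fin_cases i
    · exact ha
    · exact hb
  intro f
  exact FreeGroup.induction_on f h1 h (fun i hh => hi _ hh) hm

lemma bTau_apply : ∀ f u, bTau f u = bR f u + bTau f 0 := by
  apply gen_ind
  · intro u; simp
  · intro u; rw [bTau_a, bTau_a, bR_a]; simp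
  · intro u; rw [bTau_b, bTau_b, bR_b]; simp
  · intro f hf u
    rw [map_inv, Equiv.Perm.inv_eq_iff_eq, hf]
    have := hf ((bTau f)⁻¹ 0)
    rw [perm_aux] at this
    rw [map_add, map_inv, ← LinearEquiv.mul_apply, mul_inv_cancel,
      add_assoc, ← this]
    simp
  · intro f g hf hg u
    rw [map_mul, Equiv.Perm.mul_apply, Equiv.Perm.mul_apply, hf, hf (bTau g 0), hg u, map_mul]
    simp [add_assoc]

lemma bR_form : ∀ f, ∃ (q : ℂ) (k : ℤ), ∀ u n s,
    bR f u n s = exp (q * ((2/3)^n * s)) * u (n - k) s := by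
  apply gen_ind
  · exact ⟨0, 0, by simp⟩
  · refine ⟨0, 1, ?_⟩
    intro u n s; rw [bR_a, bX_apply]; simp
  · refine ⟨4, 0, ?_⟩
    intro u n s; rw [bR_b, bYpow_apply]; simp
  · rintro f ⟨q, k, h⟩
    refine ⟨-q * (2/3)^k, -k, ?_⟩
    intro u n s
    obtain ⟨w, rfl⟩ : ∃ w, u = bR f w := ⟨(bR f)⁻¹ u, by rw [← LinearEquiv.mul_apply]; simp⟩
    rw [h, map_inv, ← LinearEquiv.mul_apply, inv_mul_cancel, ← mul_assoc, ← exp_add]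
    rw [sub_neg_eq_add, zpow_add₀ (by norm_num)]
    rw [show (-q * (2 / 3) ^ k * ((2 / 3) ^ n * s) + q * ((2 / 3) ^ n * (2 / 3) ^ k * s)) = 0 by ring]
    simp
  · rintro f g ⟨q, k, h⟩ ⟨q', k', h'⟩
    refine ⟨q + q' * (2/3)^(-k), k + k', ?_⟩
    intro u n s
    rw [map_mul, LinearEquiv.mul_apply, h, h', ← mul_assoc, ← exp_add]
    rw [sub_eq_add_neg n k, zpow_add₀ (by norm_num)]
    congr 2
    · ring
    · ring

noncomputable def bQ (u : BV) : BV := fun n s => u (n-1) (2/3*s) - u n s + bE n s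

lemma bQ_tau : ∀ f u n, (bQ (bTau f u) - bR f (bQ u)) n (Real.pi/2*I) = 0 := by
  have hK : ∀ f (u : BV), (∀ n, u n (Real.pi/2*I) = 0) → ∀ n, bR f u n (Real.pi/2*I) = 0 := by
    intro f u hu n
    obtain ⟨q, k, h⟩ := bR_form f
    rw [h, hu, mul_zero]
  apply gen_ind
  · intro u n; simp
  · intro u n; rw [bTau_a, bR_a]; simp only [bQ, bX_apply, bE, Pi.sub_apply, Pi.add_apply]; ring
  · intro u n; rw [bTau_b, bR_b]
    simp only [bQ, Pi.sub_apply, bYpow_apply]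
    have e : ((2:ℂ)/3)^(n-1) * (2/3 * (Real.pi/2*I)) = (2/3)^n * (Real.pi/2*I) := by
      rw [zpow_sub_one₀ (by norm_num)]; ring
    rw [e]
    by_cases hn : n = 0
    · subst hn
      have : exp (((4:ℕ):ℂ) * ((2/3)^(0:ℤ) * (Real.pi/2*I))) = 1 := by
        rw [← exp_two_pi_mul_I]; congr 1; push_cast; simp; ring
      rw [this]; simp
    · simp [bE, hn]; ring
  · intro f hf u
    have h1 : ∀ n, (bR f (bQ ((bTau f)⁻¹ u)) - bQ u) n (Real.pi/2*I) = 0 := by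
      intro n
      have := hf ((bTau f)⁻¹ u) n
      rw [perm_aux] at this
      rw [← neg_sub, Pi.neg_apply, Pi.neg_apply, this, neg_zero]
    have h2 := hK f⁻¹ _ h1
    intro n
    rw [← h2 n, map_sub, map_inv, map_inv, ← LinearEquiv.mul_apply, inv_mul_cancel]
    rfl
  · intro f g hf hg u n
    have h1 := hf (bTau g u) n
    have h2 := hK f _ (hg u) n
    rw [map_sub] at h2
    rw [map_mul, map_mul]
    simp only [Equiv.Perm.mul_apply, LinearEquiv.mul_apply, Pi.sub_apply] at *
    linear_combination h1 + h2

lemma bD_key (r : bsPi.ker) (n : ℤ) :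
    bTau r 0 (n-1) (Real.pi/3*I) = bTau r 0 n (Real.pi/2*I) := by
  have h := bQ_tau r 0 n
  have hr : bR r = 1 := by rw [bR, MonoidHom.comp_apply, r.2, map_one]
  rw [hr] at h
  simp [bQ] at h
  rw [show (Real.pi/3*I : ℂ) = 2/3*(Real.pi/2*I) by ring]
  linear_combination h

/-! words -/
lemma bs_rel : bsX * bsY^2 * bsX⁻¹ = bsY^3 := by
  have : (PresentedGroup.mk bsRels) (FreeGroup.of 0 * FreeGroup.of 1 ^ 2 * (FreeGroup.of 0)⁻¹ * (FreeGroup.of 1 ^ 3)⁻¹) = 1 := 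
    PresentedGroup.one_of_mem rfl
  rw [map_mul, map_inv, mul_inv_eq_one] at this
  simp only [map_mul, map_inv, map_pow] at this
  exact this

lemma bs_rel' (k : ℕ) : bsX * bsY^(2*k) * bsX⁻¹ = bsY^(3*k) := by
  rw [pow_mul, pow_mul, ← bs_rel, conj_pow]

def wY : FreeGroup (Fin 2) := FreeGroup.of 1 ^ 7 * FreeGroup.of 0 ^ 3 * (FreeGroup.of 1 ^ 2)⁻¹ * (FreeGroup.of 0 ^ 3)⁻¹

lemma wY_pi : bsPi wY = bsY := by
  simp only [wY, map_mul, map_inv, map_pow, bsPi_0, bsPi_1]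
  have h : bsX^3 * (bsY^4)^2 * (bsX^3)⁻¹ = bsY^27 := by
    calc bsX^3 * (bsY^4)^2 * (bsX^3)⁻¹ = bsX * (bsX * (bsX * bsY^(2*4) * bsX⁻¹) * bsX⁻¹) * bsX⁻¹ := by
          simp only [← pow_mul, pow_succ bsX, pow_zero, one_mul, mul_inv_rev, mul_assoc]
      _ = bsY^27 := by
        rw [bs_rel' 4, show 3 * 4 = 2 * 6 from rfl, bs_rel', show 3 * 6 = 2 * 9 from rfl, bs_rel']
  have h' : bsX^3 * ((bsY^4)^2)⁻¹ * (bsX^3)⁻¹ = (bsY^27)⁻¹ := by rw [← h]; group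
  rw [mul_assoc, mul_assoc, ← mul_assoc (bsX^3), h']
  group

lemma bsPi_surj : Function.Surjective bsPi := by
  rw [← MonoidHom.range_eq_top, eq_top_iff, ← PresentedGroup.closure_range_of, Subgroup.closure_le]
  rintro _ ⟨i, rfl⟩
  fin_cases i
  · exact ⟨_, bsPi_0⟩
  · exact ⟨_, wY_pi⟩

def wr1 : bsPi.ker := ⟨wY^4 * (FreeGroup.of 1)⁻¹, by
  rw [MonoidHom.mem_ker, map_mul, map_pow, map_inv, wY_pi, bsPi_1, mul_inv_cancel]⟩

def wP : FreeGroup (Fin 2) := FreeGroup.of 0 * FreeGroup.of 1 * (FreeGroup.of 0)⁻¹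

def wr0 : bsPi.ker := ⟨wP * FreeGroup.of 1 * wP⁻¹ * (FreeGroup.of 1)⁻¹, by
  have : bsPi wP = bsY^6 := by
    simp only [wP, map_mul, map_inv, bsPi_0, bsPi_1]; exact bs_rel' 2
  rw [MonoidHom.mem_ker, map_mul, map_mul, map_mul, map_inv, map_inv, this, bsPi_1]; group⟩

lemma wP_tau (u n s) : bTau wP u n s = exp (6*((2/3)^n*s)) * (u n s - bE n s) + bE n s := by
  simp only [wP, map_mul, map_inv, Equiv.Perm.mul_apply, bTau_a, bTau_b, bTau_ai, Pi.add_apply, bX_apply, bYpow_apply, bXi_apply, Pi.sub_apply, sub_add_cancel]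
  congr 3
  rw [zpow_sub_one₀ (by norm_num)]; push_cast; ring

lemma wPi_tau (u n s) : (bTau wP)⁻¹ u n s = exp (-(6*((2/3)^n*s))) * (u n s - bE n s) + bE n s := by
  have h := wP_tau ((bTau wP)⁻¹ u) n s
  rw [perm_aux] at h
  rw [h, add_sub_cancel_right, ← mul_assoc, ← exp_add]
  simp

lemma wr0_tau (n s) : bTau wr0 0 n s = if n = 0 then (1 - exp (4 * s)) * (1 - exp (6*s)) else 0 := by
  simp only [wr0, map_mul, map_inv, Equiv.Perm.mul_apply, bTau_b, bTau_bi, wP_tau, wPi_tau, bYpow_apply, map_zero]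
  by_cases hn : n = 0
  · subst hn
    have := exp_neg (6*s)
    have h0 := exp_ne_zero (6*s)
    simp [bE, this]
    field_simp
    ring
  · simp [bE, hn]

lemma bTau_bpow (k : ℕ) (u n s) : (bTau (FreeGroup.of 1) ^ k) u n s = exp (4 * k * ((2/3)^n * s)) * u n s := by
  have : (bTau (FreeGroup.of 1) ^ k) u = (bY^(4*k)) u := by
    induction k generalizing u with
    | zero => simp
    | succ k ih =>
      rw [pow_succ, Equiv.Perm.mul_apply, ih, bTau_b, ← LinearEquiv.mul_apply, ← pow_add]; rfl
  rw [this, bYpow_apply]; push_cast; rfl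

lemma bTau_bpowi (k : ℕ) (u n s) : (bTau (FreeGroup.of 1) ^ k)⁻¹ u n s = exp (-(4 * k * ((2/3)^n * s))) * u n s := by
  have h := bTau_bpow k ((bTau (FreeGroup.of 1) ^ k)⁻¹ u) n s
  rw [perm_aux] at h
  rw [h, ← mul_assoc, ← exp_add]; simp

lemma bTau_a3 (u n s) : (bTau (FreeGroup.of 0) ^ 3) u n s = u (n-3) s + bE (n-2) s + bE (n-1) s + bE n s := by
  simp only [pow_succ, pow_zero, one_mul, Equiv.Perm.mul_apply, bTau_a, Pi.add_apply, bX_apply]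
  rw [show n - 1 - 1 - 1 = n - 3 by ring, show n - 1 - 1 = n - 2 by ring]

lemma bTau_a3i (u n s) : (bTau (FreeGroup.of 0) ^ 3)⁻¹ u n s = u (n+3) s - bE (n+1) s - bE (n+2) s - bE (n+3) s := by
  have h := bTau_a3 ((bTau (FreeGroup.of 0) ^ 3)⁻¹ u) (n+3) s
  rw [perm_aux] at h
  rw [h, show n + 3 - 3 = n by ring, show n + 3 - 2 = n + 1 by ring, show n + 3 - 1 = n + 2 by ring]
  ring

lemma wY_tau (u s) : bTau wY u 0 s = exp s * (u 0 s - 1) + exp (28 * s) := by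
  simp only [wY, map_mul, map_inv, map_pow, Equiv.Perm.mul_apply, bTau_bpow, bTau_bpowi, bTau_a3, bTau_a3i]
  simp only [bE]
  norm_num
  rw [mul_add, ← mul_assoc, ← exp_add, mul_one]
  congr 3
  ring

lemma wr1_tau0 (s) : bTau wr1 0 0 s = exp s * (exp s * (exp s * (exp s * (0 - 1) + exp (28 * s) - 1)
    + exp (28 * s) - 1) + exp (28 * s) - 1) + exp (28 * s) := by
  have h0 : (bTau (FreeGroup.of 1))⁻¹ 0 = 0 := by rw [bTau_bi]; simp
  have h1 : (wr1 : FreeGroup (Fin 2)) = wY * (wY * (wY * (wY * (FreeGroup.of 1)⁻¹))) := by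
    change wY^4 * (FreeGroup.of 1)⁻¹ = _
    simp only [pow_succ, pow_zero, one_mul, mul_assoc]
  rw [h1]
  simp only [map_mul, map_inv, Equiv.Perm.mul_apply, h0, wY_tau, Pi.zero_apply]

lemma wr1_tau : bTau wr1 0 0 (Real.pi/3*I) ≠ 0 := by
  rw [wr1_tau0]
  set w := exp (Real.pi/3*I) with hw
  have h3 : w^3 = -1 := by
    rw [hw, ← exp_nat_mul, ← exp_pi_mul_I]; congr 1; push_cast; ring
  have h28 : exp (28 * (Real.pi/3*I)) = -w := by
    have : exp (28 * (Real.pi/3*I)) = w^28 := by rw [hw, ← exp_nat_mul, Nat.cast_ofNat]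
    rw [this, show w^28 = (w^3)^9*w by rw [← pow_mul, ← pow_succ], h3, Odd.neg_one_pow (by decide)]; ring
  have hne : w ≠ 0 := exp_ne_zero _
  have h1 : w ≠ -1 := by
    intro h
    have h2 := congrArg Complex.re h
    rw [hw, show (Real.pi/3*I : ℂ) = ((Real.pi/3 : ℝ) : ℂ) * I by push_cast; rfl, Complex.exp_ofReal_mul_I_re, Real.cos_pi_div_three] at h2
    norm_num at h2
  rw [h28]
  intro h
  have : -2 * w^2 * (w + 1) = 0 := by
    simp at h
    linear_combination h + 2 * w * h3
  simp [hne] at this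
  exact h1 (eq_neg_of_add_eq_zero_left this)

def bGood : AddSubgroup BV where
  carrier := {u | (∀ n, AnalyticOnNhd ℂ (u n) Set.univ) ∧ {n | u n ≠ 0}.Finite}
  zero_mem' := by
    constructor
    · intro n; exact analyticOnNhd_const
    · simp
  add_mem' := by
    rintro u v ⟨hu, hu'⟩ ⟨hv, hv'⟩
    refine ⟨fun n => (hu n).add (hv n), (hu'.union hv').subset ?_⟩
    intro n hn
    by_contra hc
    simp only [Set.mem_union, Set.mem_ofPred_eq, not_or, not_not] at hc
    apply hn
    rw [Pi.add_apply, hc.1, hc.2, add_zero]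
  neg_mem' := by
    rintro u ⟨hu, hu'⟩
    refine ⟨fun n => (hu n).neg, hu'.subset ?_⟩
    intro n hn hc
    apply hn
    rw [Pi.neg_apply, hc, neg_zero]

lemma bGood_E : bE ∈ bGood := by
  constructor
  · intro n; exact analyticOnNhd_const
  · refine (Set.finite_singleton (0:ℤ)).subset ?_
    intro n hn
    by_contra hc
    apply hn
    ext s
    have : n ≠ 0 := hc
    simp [bE, this]

lemma bGood_R (f) {u : BV} (hu : u ∈ bGood) : bR f u ∈ bGood := by
  obtain ⟨q, k, h⟩ := bR_form f
  constructor
  · intro n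
    have : bR f u n = fun s => exp (q * ((2/3)^n * s)) * u (n - k) s := by ext s; exact h u n s
    rw [this]
    refine AnalyticOnNhd.mul ?_ (hu.1 (n-k))
    apply DifferentiableOn.analyticOnNhd _ isOpen_univ
    fun_prop
  · refine (hu.2.image (fun n => n + k)).subset ?_
    intro n hn
    refine ⟨n - k, ?_, by simp⟩
    intro hc
    apply hn
    ext s
    rw [h, hc]; simp

lemma bTau_mul0 (f g) : bTau (f * g) 0 = bR f (bTau g 0) + bTau f 0 := by
  rw [map_mul, Equiv.Perm.mul_apply, bTau_apply]

lemma bTau_inv0 (f) : bTau f⁻¹ 0 = - bR f⁻¹ (bTau f 0) := by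
  have := bTau_mul0 f⁻¹ f
  rw [inv_mul_cancel, map_one, Equiv.Perm.one_apply] at this
  exact (neg_eq_of_add_eq_zero_right this.symm).symm

lemma bGood_tau : ∀ f, bTau f 0 ∈ bGood := by
  apply gen_ind
  · simp
  · rw [bTau_a]; simpa using bGood_E
  · rw [bTau_b]; simp
  · intro f hf; rw [bTau_inv0]; exact neg_mem (bGood_R _ hf)
  · intro f g hf hg; rw [bTau_mul0]; exact add_mem (bGood_R _ hg) hf

noncomputable def bStar (h v : BV) : BV := fun n s => ∑ᶠ i : ℤ, h i ((2/3)^(n-i) * s) * v (n-i) s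

lemma bStar_fin {h : BV} (hh : h ∈ bGood) (v : BV) (n s) :
    (Function.support fun i : ℤ => h i ((2/3)^(n-i) * s) * v (n-i) s).Finite := by
  refine hh.2.subset ?_
  intro i hi hc
  apply hi
  simp [hc]

lemma bStar_add {h h' : BV} (hh : h ∈ bGood) (hh' : h' ∈ bGood) (v : BV) :
    bStar (h + h') v = bStar h v + bStar h' v := by
  ext n s
  simp only [bStar, Pi.add_apply]
  rw [← finsum_add_distrib (bStar_fin hh v n s) (bStar_fin hh' v n s)]
  simp only [add_mul]

lemma bStar_zero (v : BV) : bStar 0 v = 0 := by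
  ext n s; simp [bStar]

lemma bStar_neg (h v : BV) : bStar (-h) v = - bStar h v := by
  ext n s; simp [bStar, finsum_neg_distrib]

lemma bStar_zsmul (z : ℤ) (h v : BV) : bStar (z • h) v = z • bStar h v := by
  ext n s
  simp only [bStar, Pi.smul_apply, smul_finsum, smul_mul_assoc]

lemma bStar_E (v : BV) : bStar bE v = v := by
  ext n s
  rw [bStar, finsum_eq_single _ 0]
  · simp [bE]
  · intro i hi; simp [bE, hi]

lemma bStar_R (f) (h v : BV) : bStar (bR f h) v = bR f (bStar h v) := by
  obtain ⟨q, k, hf⟩ := bR_form f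
  ext n s
  rw [hf, bStar, bStar, ← finsum_comp_equiv (Equiv.addRight k), ← smul_eq_mul, smul_finsum]
  apply finsum_congr
  intro i
  simp only [Equiv.coe_addRight, hf, smul_eq_mul]
  rw [show i + k - k = i by ring, show n - (i + k) = n - k - i by ring, mul_assoc]
  congr 2
  have : ((2:ℂ)/3)^n = (2/3)^(i+k) * (2/3)^(n-k-i) := by
    rw [← zpow_add₀ (by norm_num)]; congr 1; ring
  rw [this]; ring

noncomputable def bD0 : bsPi.ker →* Multiplicative BV where
  toFun r := Multiplicative.ofAdd (bTau r 0)
  map_one' := by simp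
  map_mul' r r' := by
    have hr : bR r = 1 := by rw [bR, MonoidHom.comp_apply, r.2, map_one]
    rw [Subgroup.coe_mul, bTau_mul0, hr, ← ofAdd_add, add_comm]
    rfl

noncomputable def bD : Additive (Abelianization bsPi.ker) →+ BV :=
  MonoidHom.toAdditiveLeft (Abelianization.lift bD0)

lemma bD_of (r : bsPi.ker) : bD (Additive.ofMul (Abelianization.of r)) = bTau r 0 := by
  simp [bD, bD0]

lemma of_surj (t : Additive (Abelianization bsPi.ker)) :
    ∃ r, t = Additive.ofMul (Abelianization.of r) := by
  obtain ⟨r, hr⟩ := QuotientGroup.mk_surjective (Additive.toMul t)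
  exact ⟨r, congrArg Additive.ofMul hr.symm⟩

/-- Product of nonzero entire functions. -/
lemma ana_mul {f g : ℂ → ℂ} (hf : AnalyticOnNhd ℂ f Set.univ) (hg : AnalyticOnNhd ℂ g Set.univ)
    (hf0 : f ≠ 0) (hg0 : g ≠ 0) {c : ℂ} (hc : c ≠ 0) : ∃ s, f (c * s) * g s ≠ 0 := by
  by_contra! H
  have hf' : AnalyticOnNhd ℂ (fun s => f (c * s)) Set.univ := by
    apply DifferentiableOn.analyticOnNhd _ isOpen_univ
    have : Differentiable ℂ f := fun z => (hf z trivial).differentiableAt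
    fun_prop
  rcases AnalyticOnNhd.eq_zero_or_eq_zero_of_mul_eq_zero hf' hg (fun z _ => H z) isPreconnected_univ with h | h
  · apply hf0; ext s
    have := h (s / c) trivial
    simpa [mul_div_cancel₀ _ hc] using this
  · apply hg0; ext s; exact h s trivial

lemma star_extreme {h v : BV} (hh : h ∈ bGood) (hv : v ∈ bGood) {P Q : ℤ} (hP : v P ≠ 0) (hQ : h Q ≠ 0)
    (H : (∀ n, v n ≠ 0 → n ≤ P) ∧ (∀ n, h n ≠ 0 → n ≤ Q) ∨
      (∀ n, v n ≠ 0 → P ≤ n) ∧ (∀ n, h n ≠ 0 → Q ≤ n)) :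
    ∃ s, bStar h v (P + Q) s ≠ 0 := by
  obtain ⟨s, hs⟩ := ana_mul (hh.1 Q) (hv.1 P) hQ hP (c := (2/3)^P) (zpow_ne_zero _ (by norm_num))
  refine ⟨s, ?_⟩
  rw [bStar, finsum_eq_single _ Q]
  · simpa using hs
  · intro i hi
    by_contra hc
    have h1 : h i ≠ 0 := by intro h0; apply hc; simp [h0]
    have h2 : v (P + Q - i) ≠ 0 := by intro h0; apply hc; simp [h0]
    rcases H with H | H
    · have := H.1 _ h2; have := H.2 _ h1; omega
    · have := H.1 _ h2; have := H.2 _ h1; omega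

lemma star_homog {h v : BV} (hh : h ∈ bGood) (hv : v ∈ bGood)
    (h0 : ∀ n, n ≠ 0 → ∀ s, bStar h v n s = 0) (hne : bStar h v ≠ 0) :
    ∃ k, ∀ n, n ≠ k → v n = 0 := by
  have hv0 : {n | v n ≠ 0}.Nonempty := by
    by_contra hc
    apply hne
    ext n s
    have : ∀ n, v n = 0 := by
      intro n; by_contra h; exact hc ⟨n, h⟩
    simp [bStar, this]
  have hh0 : {n | h n ≠ 0}.Nonempty := by
    by_contra hc
    apply hne
    ext n s
    have : ∀ n, h n = 0 := by
      intro n; by_contra h; exact hc ⟨n, h⟩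
    simp [bStar, this]
  obtain ⟨P, hP, hP'⟩ := Set.exists_max_image _ id hv.2 hv0
  obtain ⟨Q, hQ, hQ'⟩ := Set.exists_max_image _ id hh.2 hh0
  obtain ⟨p, hp, hp'⟩ := Set.exists_min_image _ id hv.2 hv0
  obtain ⟨q, hq, hq'⟩ := Set.exists_min_image _ id hh.2 hh0
  obtain ⟨s, hs⟩ := star_extreme hh hv hP hQ (Or.inl ⟨hP', hQ'⟩)
  obtain ⟨s', hs'⟩ := star_extreme hh hv hp hq (Or.inr ⟨hp', hq'⟩)
  have e1 : P + Q = 0 := by by_contra hc; exact hs (h0 _ hc s)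
  have e2 : p + q = 0 := by by_contra hc; exact hs' (h0 _ hc s')
  have e3 : q ≤ Q := hQ' q hq
  refine ⟨P, fun n hn => ?_⟩
  by_contra hc
  have h1 : n ≤ P := hP' n hc
  have h2 : p ≤ n := hp' n hc
  omega

/-- The relation module `M(G,{x,z})`, `z = y⁴`, is the abelianization of
`R = ker (F(a,b) → G)` endowed with the `ℤG`-module structure in which `G`
acts by conjugation: `(π f) • (r [R,R]) = (f r f⁻¹) [R,R]`.  This module cannot
be generated by a single element. -/
theorem relationModule_x_y4_not_cyclic
    [Module (MonoidAlgebra ℤ BSGroup) (Additive (Abelianization ↥bsPi.ker))]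
    (hact : ∀ (f : FreeGroup (Fin 2)) (r r' : ↥bsPi.ker),
      (r' : FreeGroup (Fin 2)) = f * ↑r * f⁻¹ →
      MonoidAlgebra.of ℤ BSGroup (bsPi f) • Additive.ofMul (Abelianization.of r) =
        Additive.ofMul (Abelianization.of r')) :
    ¬ ∃ m : Additive (Abelianization ↥bsPi.ker),
        Submodule.span (MonoidAlgebra ℤ BSGroup) {m} = ⊤ := by
  rintro ⟨m, hm⟩
  set v := bD m with hvdef
  obtain ⟨rm, hrm⟩ := of_surj m
  have hv : v = bTau rm 0 := by rw [hvdef, hrm, bD_of]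
  have hvg : v ∈ bGood := by rw [hv]; exact bGood_tau _
  have key : ∀ t : Additive (Abelianization ↥bsPi.ker), ∃ h ∈ bGood, bD t = bStar h v := by
    intro t
    have ht : t ∈ Submodule.span (MonoidAlgebra ℤ BSGroup) {m} := by rw [hm]; trivial
    induction ht using Submodule.span_induction with
    | mem t ht =>
      rw [Set.mem_singleton_iff] at ht
      subst ht
      exact ⟨bE, bGood_E, by rw [bStar_E]⟩
    | zero => exact ⟨0, zero_mem _, by rw [bStar_zero, map_zero]⟩
    | add t t' _ _ h h' =>
      obtain ⟨h, hg, e⟩ := h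
      obtain ⟨h', hg', e'⟩ := h'
      exact ⟨h + h', add_mem hg hg', by rw [map_add, e, e', bStar_add hg hg']⟩
    | smul c t _ h =>
      obtain ⟨h, hg, e⟩ := h
      induction c using MonoidAlgebra.induction_on with
      | of g =>
        obtain ⟨f, rfl⟩ := bsPi_surj g
        obtain ⟨r, rfl⟩ := of_surj t
        rw [hact f r ⟨f * r * f⁻¹, bsPi.normal_ker.conj_mem r r.2 f⟩ rfl, bD_of]
        rw [bD_of] at e
        refine ⟨bR f h, bGood_R f hg, ?_⟩
        rw [bStar_R, ← e]
        have hr : bR (f * r * f⁻¹) = 1 := by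
          rw [bR, MonoidHom.comp_apply, map_mul bsPi, map_mul bsPi, r.2]; simp
        have h1 := bTau_mul0 (f * r * f⁻¹) f
        rw [hr, show f * (r : FreeGroup (Fin 2)) * f⁻¹ * f = f * r by group, bTau_mul0] at h1
        rw [add_comm] at h1
        exact (add_left_cancel h1).symm
      | add c c' hc hc' =>
        obtain ⟨k, hk, e1⟩ := hc
        obtain ⟨k', hk', e2⟩ := hc'
        exact ⟨k + k', add_mem hk hk', by rw [add_smul, map_add, e1, e2, bStar_add hk hk']⟩
      | smul z c hc =>
        obtain ⟨k, hk, e1⟩ := hc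
        refine ⟨z • k, zsmul_mem hk z, ?_⟩
        rw [smul_assoc, map_zsmul, e1, bStar_zsmul]
  obtain ⟨h0, hg0, e0⟩ := key (Additive.ofMul (Abelianization.of wr0))
  obtain ⟨h1, hg1, e1⟩ := key (Additive.ofMul (Abelianization.of wr1))
  rw [bD_of] at e0 e1
  obtain ⟨k, hk⟩ := star_homog hg0 hvg (by
    intro n hn s
    rw [← e0, wr0_tau, if_neg hn]) (by
    rw [← e0]
    intro hc
    have := congrFun (congrFun hc 0) 1
    rw [wr0_tau] at this
    simp only [if_true, Pi.zero_apply, mul_eq_zero, sub_eq_zero] at this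
    have hex : ∀ x : ℝ, 0 < x → (1:ℂ) ≠ exp ((x:ℂ) * 1) := by
      intro x hx h
      rw [mul_one, ← ofReal_exp] at h
      have h' : (1:ℝ) = Real.exp x := by exact_mod_cast h
      have := Real.add_one_lt_exp hx.ne'
      linarith
    rcases this with h | h
    · exact hex 4 (by norm_num) (by rw [ofReal_ofNat]; exact h)
    · exact hex 6 (by norm_num) (by rw [ofReal_ofNat]; exact h))
  have hvk : v k (Real.pi/3*I) = 0 := by
    have := bD_key rm (k+1)
    rw [← hv, add_sub_cancel_right, hk (k+1) (by omega)] at this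
    simpa using this
  apply wr1_tau
  rw [e1, bStar]
  apply finsum_eq_zero_of_forall_eq_zero
  intro i
  by_cases hi : 0 - i = k
  · rw [hi, hvk, mul_zero]
  · rw [hk _ hi]; simp
end

section
/- Let G = ⟨x, y | x y² x⁻¹ = y³⟩, z = y⁴, and M = M(G,{x,z}) the associated relation module. Then M is stably free non-free of rank one: there is a ℤG-module isomorphism M ⊕ ℤG ≅ ℤG ⊕ ℤG, but M is not isomorphic to ℤG (indeed M is not a cyclic ℤG-module). -/
namespace BSProof

set_option linter.unusedSimpArgs false

abbrev ZG := MonoidAlgebra ℤ BSGroup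

noncomputable def o : BSGroup →* ZG := MonoidAlgebra.of ℤ BSGroup

@[ext] structure FoxPair where
  g : BSGroup
  d : ZG

noncomputable instance : Group FoxPair :=
  @Group.ofLeftAxioms FoxPair ⟨fun p q => ⟨p.g * q.g, p.d + o p.g * q.d⟩⟩
    ⟨fun p => ⟨p.g⁻¹, - (o p.g⁻¹ * p.d)⟩⟩ ⟨⟨1, 0⟩⟩
    (by
      intro p q r
      ext1
      · exact mul_assoc _ _ _
      · change (p.d + o p.g * q.d) + o (p.g * q.g) * r.d = p.d + o p.g * (q.d + o q.g * r.d)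
        rw [map_mul, mul_add, mul_assoc, add_assoc])
    (by
      intro p
      ext1
      · exact one_mul _
      · change (0 : ZG) + o 1 * p.d = p.d
        rw [map_one, one_mul, zero_add])
    (by
      intro p
      ext1
      · exact inv_mul_cancel _
      · change - (o p.g⁻¹ * p.d) + o p.g⁻¹ * p.d = 0
        rw [neg_add_cancel])

theorem FoxPair.mul_g (p q : FoxPair) : (p * q).g = p.g * q.g := rfl
theorem FoxPair.mul_d (p q : FoxPair) : (p * q).d = p.d + o p.g * q.d := rfl
theorem FoxPair.one_g : (1 : FoxPair).g = 1 := rfl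
theorem FoxPair.one_d : (1 : FoxPair).d = 0 := rfl

def FoxPair.gHom : FoxPair →* BSGroup where
  toFun := FoxPair.g
  map_one' := rfl
  map_mul' _ _ := rfl

noncomputable def foxHom (p q : ZG) : FreeGroup (Fin 2) →* FoxPair :=
  FreeGroup.lift (fun i => if i = 0 then ⟨bsX, p⟩ else ⟨bsY ^ 4, q⟩)

theorem foxHom_g (p q : ZG) (f : FreeGroup (Fin 2)) : (foxHom p q f).g = bsPi f := by
  have : FoxPair.gHom.comp (foxHom p q) = bsPi := by
    ext i
    fin_cases i <;> simp [foxHom, bsPi, FoxPair.gHom]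
  exact DFunLike.congr_fun this f

noncomputable def D (p q : ZG) (f : FreeGroup (Fin 2)) : ZG := (foxHom p q f).d

theorem D_mul (p q : ZG) (f g : FreeGroup (Fin 2)) :
    D p q (f * g) = D p q f + o (bsPi f) * D p q g := by
  unfold D
  rw [map_mul, FoxPair.mul_d, foxHom_g]

theorem D_one (p q : ZG) : D p q 1 = 0 := by
  unfold D
  rw [map_one, FoxPair.one_d]

abbrev fa : FreeGroup (Fin 2) := FreeGroup.of 0
abbrev fc : FreeGroup (Fin 2) := FreeGroup.of 1
def fw : FreeGroup (Fin 2) := fa ^ 2 * fc * (fa ^ 2)⁻¹ * (fc ^ 2)⁻¹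
def fr : FreeGroup (Fin 2) := fa * fw ^ 2 * fa⁻¹ * (fw ^ 3)⁻¹
def fs : FreeGroup (Fin 2) := fc * (fw ^ 4)⁻¹
def fq : FreeGroup (Fin 2) := fa * fc ^ 2 * fa⁻¹ * (fc ^ 3)⁻¹

theorem D_a (p q : ZG) : D p q fa = p := by simp [D, foxHom]
theorem D_c (p q : ZG) : D p q fc = q := by simp [D, foxHom]
theorem pi_a : bsPi fa = bsX := by simp [bsPi]
theorem pi_c : bsPi fc = bsY ^ 4 := by simp [bsPi]

theorem rel : bsX * bsY ^ 2 = bsY ^ 3 * bsX := by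
  have h : PresentedGroup.mk bsRels (FreeGroup.of 0 * FreeGroup.of 1 ^ 2 * (FreeGroup.of 0)⁻¹ *
      (FreeGroup.of 1 ^ 3)⁻¹) = 1 := PresentedGroup.one_of_mem rfl
  simp only [map_mul, map_pow, map_inv] at h
  change bsX * bsY ^ 2 * bsX⁻¹ * (bsY ^ 3)⁻¹ = 1 at h
  rw [mul_inv_eq_one, mul_inv_eq_iff_eq_mul] at h
  exact h

theorem rel4 : bsX * bsY ^ 4 = bsY ^ 6 * bsX := by
  rw [show bsY ^ 4 = bsY ^ 2 * bsY ^ 2 from by group, ← mul_assoc, rel, mul_assoc, rel]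
  group
theorem rel6 : bsX * bsY ^ 6 = bsY ^ 9 * bsX := by
  rw [show bsY ^ 6 = bsY ^ 4 * bsY ^ 2 from by group, ← mul_assoc, rel4, mul_assoc, rel]
  group

theorem pi_w : bsPi fw = bsY := by
  simp only [fw, map_mul, map_pow, map_inv, pi_a, pi_c]
  rw [mul_inv_eq_iff_eq_mul, mul_inv_eq_iff_eq_mul, pow_two bsX, mul_assoc bsX, rel4, ← mul_assoc,
    rel6]
  group

theorem r_mem : fr ∈ bsPi.ker := by
  rw [MonoidHom.mem_ker]
  simp only [fr, map_mul, map_pow, map_inv, pi_a, pi_w]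
  rw [mul_inv_eq_iff_eq_mul, mul_inv_eq_iff_eq_mul, rel, one_mul]
theorem s_mem : fs ∈ bsPi.ker := by
  rw [MonoidHom.mem_ker]
  simp only [fs, map_mul, map_pow, map_inv, pi_c, pi_w]
  group
theorem q_mem : fq ∈ bsPi.ker := by
  rw [MonoidHom.mem_ker]
  simp only [fq, map_mul, map_pow, map_inv, pi_a, pi_c]
  rw [mul_inv_eq_iff_eq_mul, mul_inv_eq_iff_eq_mul,
    show (bsY ^ 4) ^ 2 = bsY ^ 4 * bsY ^ 4 from by group, ← mul_assoc, rel4, mul_assoc, rel4]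
  group

theorem pi_surj : Function.Surjective bsPi := by
  rw [← MonoidHom.range_eq_top, eq_top_iff, ← PresentedGroup.closure_range_of, Subgroup.closure_le]
  rintro _ ⟨i, rfl⟩
  fin_cases i
  · exact ⟨fa, pi_a⟩
  · exact ⟨fw, pi_w⟩

noncomputable abbrev X : ZG := o bsX
noncomputable abbrev Y : ZG := o bsY

theorem relZ : X * Y ^ 2 = Y ^ 3 * X := by
  simp only [X, Y, ← map_pow, ← map_mul, rel]
theorem relZ4 : X * Y ^ 4 = Y ^ 6 * X := by
  simp only [X, Y, ← map_pow, ← map_mul, rel4]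
theorem relZ6 : X * Y ^ 6 = Y ^ 9 * X := by
  simp only [X, Y, ← map_pow, ← map_mul, rel6]

theorem D_w (p q : ZG) : D p q fw =
    (X ^ 2 - Y - Y ^ 5) * q + (1 + X - Y ^ 9 * (1 + X)) * p := by
  have h : fw * (fc * (fc * (fa * fa))) = fa * (fa * fc) := by
    simp [fw, pow_succ, mul_assoc]
  have h2 := congrArg (D p q) h
  simp only [D_mul, D_a, D_c, pi_a, pi_c, pi_w, map_pow] at h2
  rw [← sub_eq_zero] at h2 ⊢
  refine Eq.trans ?_ h2
  simp only [X, Y]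
  noncomm_ring

theorem D_r (p q : ZG) : D p q fr =
    (1 - Y ^ 3) * p - ((1 + Y + Y ^ 2) - X * (1 + Y)) * D p q fw := by
  have h : fr * (fw * (fw * (fw * fa))) = fa * (fw * fw) := by
    simp [fr, pow_succ, mul_assoc]
  have h2 := congrArg (D p q) h
  simp only [D_mul, D_a, D_c, pi_a, pi_c, pi_w, map_pow, MonoidHom.mem_ker.1 r_mem, map_one] at h2
  rw [← sub_eq_zero] at h2 ⊢
  refine Eq.trans ?_ h2
  noncomm_ring

theorem D_s (p q : ZG) : D p q fs = q - (1 + Y + Y ^ 2 + Y ^ 3) * D p q fw := by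
  have h : fs * (fw * (fw * (fw * fw))) = fc := by
    simp [fs, pow_succ, mul_assoc]
  have h2 := congrArg (D p q) h
  simp only [D_mul, D_a, D_c, pi_a, pi_c, pi_w, map_pow, MonoidHom.mem_ker.1 s_mem, map_one] at h2
  rw [← sub_eq_zero] at h2 ⊢
  refine Eq.trans ?_ h2
  noncomm_ring

theorem D_q (q : ZG) : D 0 q fq =
    X * (1 + Y ^ 4) * q - (1 + Y ^ 4 + Y ^ 8) * q := by
  have h : fq * (fc * (fc * (fc * fa))) = fa * (fc * fc) := by
    simp [fq, pow_succ, mul_assoc]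
  have h2 := congrArg (D 0 q) h
  simp only [D_mul, D_a, D_c, pi_a, pi_c, pi_w, map_pow, MonoidHom.mem_ker.1 q_mem, map_one] at h2
  rw [← sub_eq_zero] at h2 ⊢
  refine Eq.trans ?_ h2
  noncomm_ring

theorem D_fund (f : FreeGroup (Fin 2)) :
    D 1 0 f * (X - 1) + D 0 1 f * (Y ^ 4 - 1) = o (bsPi f) - 1 := by
  have key : ∀ g : FreeGroup (Fin 2), 
      D 1 0 g * (X - 1) + D 0 1 g * (Y ^ 4 - 1) = o (bsPi g) - 1 →
      ∀ f, D 1 0 (f * g) * (X - 1) + D 0 1 (f * g) * (Y ^ 4 - 1) - (o (bsPi (f * g)) - 1) = 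
       D 1 0 f * (X - 1) + D 0 1 f * (Y ^ 4 - 1) - (o (bsPi f) - 1) := by
    intro g hg f
    rw [D_mul, D_mul, map_mul, map_mul]
    have : o (bsPi f) * (D 1 0 g * (X - 1) + D 0 1 g * (Y ^ 4 - 1)) =
       o (bsPi f) * (o (bsPi g) - 1) := by rw [hg]
    rw [← sub_eq_zero] at this ⊢
    refine Eq.trans ?_ this
    noncomm_ring
  have gen : ∀ i : Fin 2, D 1 0 (FreeGroup.of i) * (X - 1) + D 0 1 (FreeGroup.of i) * (Y ^ 4 - 1)
      = o (bsPi (FreeGroup.of i)) - 1 := by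
    intro i
    fin_cases i
    · change D 1 0 fa * (X - 1) + D 0 1 fa * (Y ^ 4 - 1) = o (bsPi fa) - 1
      simp [D_a, pi_a]
    · change D 1 0 fc * (X - 1) + D 0 1 fc * (Y ^ 4 - 1) = o (bsPi fc) - 1
      simp [D_c, pi_c]
  induction f using FreeGroup.induction_on with
  | C1 => simp [D_one]
  | of i => exact gen i
  | inv_of i _ =>
    have := key _ (gen i) (FreeGroup.of i)⁻¹
    rw [inv_mul_cancel] at this
    simp only [D_one, map_one, zero_mul, add_zero, sub_self] at this
    exact (sub_eq_zero.1 this.symm)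
  | mul f g hf hg =>
    have := key g hg f
    rw [hf, sub_self] at this
    exact sub_eq_zero.1 this

end BSProof

namespace BSProof

abbrev M := Additive (Abelianization ↥bsPi.ker)

def cl (r : ↥bsPi.ker) : M := Additive.ofMul (Abelianization.of r)

theorem cl_mul (r s : ↥bsPi.ker) : cl (r * s) = cl r + cl s := rfl
theorem cl_one : cl 1 = 0 := rfl
theorem cl_inv (r : ↥bsPi.ker) : cl r⁻¹ = - cl r := rfl
theorem cl_surj (m : M) : ∃ r, cl r = m := by
  obtain ⟨r, hr⟩ := QuotientGroup.mk_surjective (Additive.toMul m)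
  exact ⟨r, hr⟩

def cj (f : FreeGroup (Fin 2)) (r : ↥bsPi.ker) : ↥bsPi.ker :=
  ⟨f * r * f⁻¹, (inferInstance : bsPi.ker.Normal).conj_mem _ r.2 f⟩

noncomputable def PhiAdd (p q : ZG) : M →+ ZG :=
  MonoidHom.toAdditiveLeft (Abelianization.lift
    ({ toFun := fun r => Multiplicative.ofAdd (D p q r)
       map_one' := by
         change Multiplicative.ofAdd (D p q 1) = 1
         rw [D_one]; rfl
       map_mul' := by
         intro r s
         change Multiplicative.ofAdd (D p q (r * s)) = _
         rw [D_mul, MonoidHom.mem_ker.1 r.2, map_one, one_mul]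
         rfl } : ↥bsPi.ker →* Multiplicative ZG))

theorem PhiAdd_cl (p q : ZG) (r : ↥bsPi.ker) : PhiAdd p q (cl r) = D p q r := rfl

theorem D_conj (p q : ZG) (f : FreeGroup (Fin 2)) (r : ↥bsPi.ker) :
    D p q (f * r * f⁻¹) = o (bsPi f) * D p q r := by
  have h : (f * r * f⁻¹) * f = f * r := by group
  have h2 := congrArg (D p q) h
  have h3 : bsPi (f * r * f⁻¹) = 1 := (cj f r).2
  rw [D_mul p q (f * r * f⁻¹) f, D_mul p q f r, h3, map_one, one_mul] at h2
  rw [add_comm] at h2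
  exact add_left_cancel h2

noncomputable def A : ZG := X * (1 + Y ^ 3) + (1 + Y ^ 3 + Y ^ 6)
noncomputable def B : ZG := X ^ 2 - Y - Y ^ 5
noncomputable def E : ZG := (1 + Y + Y ^ 2) - X * (1 + Y)
noncomputable def N : ZG := 1 + Y + Y ^ 2 + Y ^ 3

theorem unimod : A * E + B * N = 1 := by
  have h1 : (1 + Y ^ 3 + Y ^ 6) * X = X * (1 + Y ^ 2 + Y ^ 4) := by
    rw [add_mul, add_mul, mul_add, mul_add, relZ, relZ4]; simp
  have h2 : (1 + Y ^ 3) * X = X * (1 + Y ^ 2) := by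
    rw [add_mul, mul_add, relZ]; simp
  have : A * E + B * N = 1 - ((1 + Y ^ 3 + Y ^ 6) * X - X * (1 + Y ^ 2 + Y ^ 4)) * (1 + Y)
      - X * ((1 + Y ^ 3) * X - X * (1 + Y ^ 2)) * (1 + Y) := by
    unfold A E B N
    noncomm_ring
  rw [this, h1, h2]
  simp

theorem D_r' (p q : ZG) : D p q fr = (1 - Y ^ 3) * p - E * D p q fw := D_r p q
theorem D_s' (p q : ZG) : D p q fs = q - N * D p q fw := D_s p q

theorem alg1 (u v e n d y : ZG) (h : u * (y * 0 - e * d) + v * (1 - n * d) = 0)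
    (h2 : u * e + v * n = 0) : v = 0 := by
  have : v = (u * (y * 0 - e * d) + v * (1 - n * d)) + (u * e + v * n) * d := by noncomm_ring
  rw [this, h, h2]; simp

theorem alg2 (u v e n d y : ZG) (h : u * (y * 1 - e * d) + v * (0 - n * d) = 0)
    (h2 : u * e + v * n = 0) : u * y = 0 := by
  have : u * y = (u * (y * 1 - e * d) + v * (0 - n * d)) + (u * e + v * n) * d := by noncomm_ring
  rw [this, h, h2]; simp

section
variable [Module (MonoidAlgebra ℤ BSGroup) (Additive (Abelianization ↥bsPi.ker))]

def Hact : Prop := ∀ (f : FreeGroup (Fin 2)) (r : ↥bsPi.ker), o (bsPi f) • cl r = cl (cj f r)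

theorem Phi_smul (hact : Hact) (p q : ZG) (u : ZG) (m : M) :
    PhiAdd p q (u • m) = u * PhiAdd p q m := by
  induction u using MonoidAlgebra.induction_on with
  | of g =>
    obtain ⟨f, rfl⟩ := pi_surj g
    obtain ⟨r, rfl⟩ := cl_surj m
    change PhiAdd p q (o (bsPi f) • cl r) = o (bsPi f) * _
    rw [hact, PhiAdd_cl, PhiAdd_cl]
    exact D_conj p q f r
  | add a b ha hb => rw [add_smul, map_add, ha, hb, add_mul]
  | smul n a ha =>
    rw [smul_assoc, map_zsmul, ha, smul_mul_assoc]

noncomputable def Phi (hact : Hact) (p q : ZG) : M →ₗ[ZG] ZG :=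
  { PhiAdd p q with map_smul' := Phi_smul hact p q }

theorem Phi_cl (hact : Hact) (p q : ZG) (r : ↥bsPi.ker) : Phi hact p q (cl r) = D p q r := rfl

def kr : ↥bsPi.ker := ⟨fr, r_mem⟩
def ks : ↥bsPi.ker := ⟨fs, s_mem⟩
def kq : ↥bsPi.ker := ⟨fq, q_mem⟩

theorem relation_AB (hact : Hact) : A • cl kr + B • cl ks = 0 := by
  have key : cj (fa ^ 2) ks * cj fa kr * cj (fa * fw ^ 3) kr * kr * cj (fw ^ 3) kr *
      cj (fw ^ 6) kr * (cj (fw ^ 5) ks)⁻¹ * (cj fw ks)⁻¹ = 1 := by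
    apply Subtype.ext
    change (fa ^ 2 * fs * (fa ^ 2)⁻¹) * (fa * fr * fa⁻¹) * ((fa * fw ^ 3) * fr * (fa * fw ^ 3)⁻¹) *
      fr * (fw ^ 3 * fr * (fw ^ 3)⁻¹) * (fw ^ 6 * fr * (fw ^ 6)⁻¹) *
      (fw ^ 5 * fs * (fw ^ 5)⁻¹)⁻¹ * (fw * fs * fw⁻¹)⁻¹ = 1
    have h : fa ^ 2 * fc * (fa ^ 2)⁻¹ * (fc ^ 2)⁻¹ * fw⁻¹ = 1 := by
      rw [← fw, mul_inv_cancel]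
    rw [← h]
    simp only [fr, fs]
    generalize fw = w
    simp only [pow_succ, pow_zero, one_mul, mul_inv_rev, inv_inv, mul_assoc, 
      mul_inv_cancel_left, inv_mul_cancel_left]
  have h := congrArg cl key
  simp only [cl_mul, cl_inv, cl_one, ← hact _ _, map_mul, map_pow, pi_a, pi_w] at h
  rw [← h]
  simp only [A, B, add_smul, sub_smul, mul_add, mul_one, one_smul, X, Y]
  abel

theorem ker_eq : bsPi.ker = Subgroup.normalClosure {fr, fs} := by
  apply le_antisymm
  · set Nn := Subgroup.normalClosure ({fr, fs} : Set (FreeGroup (Fin 2))) with hN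
    have hr : fr ∈ Nn := Subgroup.subset_normalClosure (by simp)
    have hs : fs ∈ Nn := Subgroup.subset_normalClosure (by simp)
    have hf : ∀ r ∈ bsRels, FreeGroup.lift (fun i : Fin 2 => if i = 0 then
        QuotientGroup.mk' Nn fa else QuotientGroup.mk' Nn fw) r = 1 := by
      intro r hr'
      rw [Set.mem_singleton_iff.1 hr']
      have : QuotientGroup.mk' Nn fr = 1 := (QuotientGroup.eq_one_iff _).2 hr
      simpa [fr] using this
    have hcomp : (PresentedGroup.toGroup hf).comp bsPi = QuotientGroup.mk' Nn := by
      have hx : PresentedGroup.toGroup hf bsX = QuotientGroup.mk' Nn fa := by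
        rw [bsX, PresentedGroup.toGroup.of]; simp
      have hy : PresentedGroup.toGroup hf bsY = QuotientGroup.mk' Nn fw := by
        rw [bsY, PresentedGroup.toGroup.of]; simp
      ext i
      fin_cases i
      · change PresentedGroup.toGroup hf (bsPi fa) = QuotientGroup.mk' Nn fa
        rw [pi_a, hx]
      · change PresentedGroup.toGroup hf (bsPi fc) = QuotientGroup.mk' Nn fc
        rw [pi_c, map_pow, hy]
        have : QuotientGroup.mk' Nn (fc * (fw ^ 4)⁻¹) = 1 :=
          (QuotientGroup.eq_one_iff _).2 hs
        rw [map_mul, map_inv, mul_inv_eq_one, map_pow] at this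
        exact this.symm
    intro f hf'
    have := DFunLike.congr_fun hcomp f
    rw [MonoidHom.comp_apply, MonoidHom.mem_ker.1 hf', map_one] at this
    exact (QuotientGroup.eq_one_iff _).1 this.symm
  · apply Subgroup.normalClosure_le_normal
    rintro _ (rfl | rfl)
    · exact r_mem
    · exact s_mem

theorem span_top (hact : Hact) (m : M) : m ∈ Submodule.span ZG {cl kr, cl ks} := by
  obtain ⟨r, rfl⟩ := cl_surj m
  set P := Submodule.span ZG {cl kr, cl ks}
  let K : Subgroup (FreeGroup (Fin 2)) :=
    { carrier := {f | ∃ h : f ∈ bsPi.ker, cl ⟨f, h⟩ ∈ P}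
      one_mem' := ⟨one_mem _, P.zero_mem⟩
      mul_mem' := fun {a b} ha hb => ⟨mul_mem ha.1 hb.1, P.add_mem ha.2 hb.2⟩
      inv_mem' := fun {a} ha => ⟨inv_mem ha.1, P.neg_mem ha.2⟩ }
  have hK : K.Normal := by
    constructor
    rintro n ⟨hn, hn'⟩ g
    refine ⟨(cj g ⟨n, hn⟩).2, ?_⟩
    change cl (cj g ⟨n, hn⟩) ∈ P
    rw [← hact]
    exact P.smul_mem _ hn'
  have hle : Subgroup.normalClosure {fr, fs} ≤ K := by
    apply Subgroup.normalClosure_le_normal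
    rintro _ (rfl | rfl)
    · exact ⟨r_mem, Submodule.subset_span (by left; rfl)⟩
    · exact ⟨s_mem, Submodule.subset_span (by right; rfl)⟩
  rw [← ker_eq] at hle
  exact (hle r.2).2

theorem stable (hact : Hact) (hinj : ∀ u : ZG, u * (1 - Y ^ 3) = 0 → u = 0) :
    Nonempty ((M × ZG) ≃ₗ[ZG] (ZG × ZG)) := by
  let psi : (ZG × ZG) →ₗ[ZG] (M × ZG) :=
    { toFun := fun p => (p.1 • cl kr + p.2 • cl ks, p.1 * E + p.2 * N)
      map_add' := by
        intro p q
        ext1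
        · simp only [Prod.fst_add, Prod.snd_add, add_smul]; abel
        · simp only [Prod.fst_add, Prod.snd_add, add_mul]; abel
      map_smul' := by
        intro c p
        ext1
        · simp only [Prod.smul_fst, Prod.smul_snd, smul_eq_mul, mul_smul, RingHom.id_apply, smul_add]
        · simp only [Prod.smul_fst, Prod.smul_snd, smul_eq_mul, mul_assoc, RingHom.id_apply, mul_add] }
  refine ⟨(LinearEquiv.ofBijective psi ⟨?_, ?_⟩).symm⟩
  · rw [injective_iff_map_eq_zero]
    rintro ⟨u, v⟩ h
    have h1 : u • cl kr + v • cl ks = 0 := congrArg Prod.fst h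
    have h2 : u * E + v * N = 0 := congrArg Prod.snd h
    have hx := congrArg (Phi hact 1 0) h1
    have hz := congrArg (Phi hact 0 1) h1
    rw [map_add, map_smul, map_smul, map_zero, Phi_cl, Phi_cl, smul_eq_mul, smul_eq_mul] at hx hz
    simp only [kr, ks] at hx hz
    rw [D_r', D_s'] at hx hz
    have hu : u = 0 := hinj u (alg2 _ _ _ _ _ _ hx h2)
    have hv : v = 0 := alg1 _ _ _ _ _ _ hz h2
    rw [hu, hv]
    rfl
  · rintro ⟨m, t⟩
    obtain ⟨u, v, huv⟩ := Submodule.mem_span_pair.1 (span_top hact m)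
    refine ⟨(u + (t - (u * E + v * N)) * A, v + (t - (u * E + v * N)) * B), ?_⟩
    ext1
    · change (u + (t - (u * E + v * N)) * A) • cl kr + (v + (t - (u * E + v * N)) * B) • cl ks = m
      rw [add_smul, add_smul, mul_smul, mul_smul, add_add_add_comm, ← smul_add, relation_AB hact,
        smul_zero, add_zero, huv]
    · change (u + (t - (u * E + v * N)) * A) * E + (v + (t - (u * E + v * N)) * B) * N = t
      rw [add_mul, add_mul, mul_assoc _ A, mul_assoc _ B, add_add_add_comm, ← mul_add, unimod,
        mul_one]
      abel

end

end BSProof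

namespace BSProof


section Skew

set_option linter.unusedSectionVars false

variable {R : Type} [CommRing R] [NoZeroDivisors R] [MulSemiringAction (Multiplicative ℤ) R]

abbrev SS (R : Type) [CommRing R] := SkewMonoidAlgebra R (Multiplicative ℤ)

abbrev tt (i : ℤ) : Multiplicative ℤ := Multiplicative.ofAdd i

def cf (f : SS R) (i : ℤ) : R := f.coeff (tt i)

theorem cf_ext {f g : SS R} (h : ∀ i, cf f i = cf g i) : f = g :=
  SkewMonoidAlgebra.ext fun a => h a.toAdd

theorem cf_add (f g : SS R) (i : ℤ) : cf (f + g) i = cf f i + cf g i := by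
  simp [cf]

theorem cf_single (j : ℤ) (r : R) (i : ℤ) :
    cf (SkewMonoidAlgebra.single (tt j) r) i = if j = i then r else 0 := by
  classical
  unfold cf
  rw [SkewMonoidAlgebra.coeff_single_apply]
  simp

theorem cf_min (f g : SS R) (m n : ℤ) (hf : ∀ i < m, cf f i = 0) (hg : ∀ j < n, cf g j = 0) :
    cf (f * g) (m + n) = cf f m * tt m • cf g n := by
  unfold cf at *
  rw [SkewMonoidAlgebra.coeff_mul_left, SkewMonoidAlgebra.sum_def']
  rw [Finset.sum_eq_single (tt m)]
  · congr 3
    change tt (-m + (m + n)) = _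
    rw [neg_add_cancel_left]
  · intro b _ hb
    rcases lt_trichotomy b.toAdd m with h | h | h
    · have := hf b.toAdd h
      rw [show tt b.toAdd = b from rfl] at this
      rw [this, zero_mul]
    · exact absurd h hb
    · have := hg (- b.toAdd + (m + n)) (by omega)
      rw [show tt (- b.toAdd + (m + n)) = b⁻¹ * tt (m + n) from rfl] at this
      rw [this, smul_zero, mul_zero]
  · intro h
    rw [SkewMonoidAlgebra.notMem_support_iff.1 h, zero_mul]

theorem cf_max (f g : SS R) (m n : ℤ) (hf : ∀ i > m, cf f i = 0) (hg : ∀ j > n, cf g j = 0) :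
    cf (f * g) (m + n) = cf f m * tt m • cf g n := by
  unfold cf at *
  rw [SkewMonoidAlgebra.coeff_mul_left, SkewMonoidAlgebra.sum_def']
  rw [Finset.sum_eq_single (tt m)]
  · congr 3
    change tt (-m + (m + n)) = _
    rw [neg_add_cancel_left]
  · intro b _ hb
    rcases lt_trichotomy b.toAdd m with h | h | h
    · have := hg (- b.toAdd + (m + n)) (by omega)
      rw [show tt (- b.toAdd + (m + n)) = b⁻¹ * tt (m + n) from rfl] at this
      rw [this, smul_zero, mul_zero]
    · exact absurd h hb
    · have := hf b.toAdd h
      rw [show tt b.toAdd = b from rfl] at this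
      rw [this, zero_mul]
  · intro h
    rw [SkewMonoidAlgebra.notMem_support_iff.1 h, zero_mul]

theorem exists_min (f : SS R) (hf : f ≠ 0) : ∃ m, cf f m ≠ 0 ∧ ∀ i < m, cf f i = 0 := by
  have hne : f.support.Nonempty := by
    rw [Finset.nonempty_iff_ne_empty]
    intro h
    exact hf (SkewMonoidAlgebra.support_eq_empty.1 h)
  refine ⟨(f.support.min' hne).toAdd, SkewMonoidAlgebra.mem_support_iff.1 (f.support.min'_mem hne), ?_⟩
  intro i hi
  by_contra h
  have := f.support.min'_le (tt i) (SkewMonoidAlgebra.mem_support_iff.2 h)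
  exact absurd hi (not_lt.2 this)

theorem exists_max (f : SS R) (hf : f ≠ 0) : ∃ m, cf f m ≠ 0 ∧ ∀ i > m, cf f i = 0 := by
  have hne : f.support.Nonempty := by
    rw [Finset.nonempty_iff_ne_empty]
    intro h
    exact hf (SkewMonoidAlgebra.support_eq_empty.1 h)
  refine ⟨(f.support.max' hne).toAdd, SkewMonoidAlgebra.mem_support_iff.1 (f.support.max'_mem hne), ?_⟩
  intro i hi
  by_contra h
  have := f.support.le_max' (tt i) (SkewMonoidAlgebra.mem_support_iff.2 h)
  exact absurd hi (not_lt.2 this)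

theorem smul_ne (m : ℤ) (a : R) (ha : a ≠ 0) : tt m • a ≠ 0 := by
  intro h
  apply ha
  have := congrArg (fun z => (tt m)⁻¹ • z) h
  simpa using this

noncomputable def eps : SS R →+ R :=
  SkewMonoidAlgebra.liftNC (AddMonoidHom.id R) (fun _ => 1)

theorem eps_single (a : Multiplicative ℤ) (r : R) : eps (SkewMonoidAlgebra.single a r) = r := by
  simp [eps]

theorem eps_mul_t (e : SS R) (a : Multiplicative ℤ) :
    eps (e * SkewMonoidAlgebra.single a 1) = eps e := by
  induction e using SkewMonoidAlgebra.induction_on with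
  | zero => simp
  | single g r => rw [SkewMonoidAlgebra.single_mul_single, eps_single, eps_single]; simp
  | add f g hf hg => rw [add_mul, map_add, map_add, hf, hg]

theorem lemA (y : R) (hy : tt 1 • y ^ 2 = y ^ 3) (ev : R →+* ℂ) (hev : ev y ^ 2 - ev y + 1 = 0)
    (a b : R) (ha : a ≠ 0) (g h e : SS R)
    (hg : g = SkewMonoidAlgebra.single (tt 0) a + SkewMonoidAlgebra.single (tt 1) b)
    (h2 : h * g = SkewMonoidAlgebra.single (tt 0) (1 + y + y ^ 2 + y ^ 3 + y ^ 4 + y ^ 5 + y ^ 6 + y ^ 7 + y ^ 8) +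
      SkewMonoidAlgebra.single (tt 2) (-(1 + y + y ^ 2 + y ^ 3)))
    (h3 : e * (SkewMonoidAlgebra.single (tt 1) 1 - 1) +
      g * (SkewMonoidAlgebra.single (tt 0) (y ^ 4) - 1) = 0) : False := by
  have hy4 : tt 1 • y ^ 4 = y ^ 6 := by
    rw [show y ^ 4 = y ^ 2 * y ^ 2 by ring, smul_mul', hy]; ring
  have h4 := congrArg eps h3
  rw [map_add, mul_sub, map_sub, eps_mul_t, mul_one, sub_self, zero_add, map_zero, hg, add_mul,
    mul_sub, mul_sub, mul_one, mul_one, SkewMonoidAlgebra.single_mul_single,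
    SkewMonoidAlgebra.single_mul_single, hy4, map_add, map_sub, map_sub, eps_single, eps_single,
    eps_single, eps_single, show tt 0 = 1 from rfl, one_smul] at h4
  have hu : y ^ 2 - 1 ≠ 0 := by
    intro h
    have h' := congrArg ev h
    simp only [map_sub, map_pow, map_one, map_zero] at h'
    have e1 : ev y = 2 := by linear_combination h' - hev
    rw [e1] at h'
    norm_num at h'
  have h5 : a * (y ^ 2 + 1) + b * (y ^ 4 + y ^ 2 + 1) = 0 := by
    have : (y ^ 2 - 1) * (a * (y ^ 2 + 1) + b * (y ^ 4 + y ^ 2 + 1)) = 0 := by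
      linear_combination h4
    exact (mul_eq_zero.1 this).resolve_left hu
  have h6 : a = (1 + y ^ 2 + y ^ 4) * (a + y ^ 2 * b) := by
    linear_combination -(y ^ 2) * h5
  have h7 : ev a = 0 := by
    rw [h6]
    simp only [map_mul, map_add, map_pow, map_one]
    linear_combination (ev y ^ 2 + ev y + 1) * (ev a + ev y ^ 2 * ev b) * hev
  have g0 : cf g 0 = a := by rw [hg, cf_add, cf_single, cf_single]; simp
  have gneg : ∀ j < 0, cf g j = 0 := by
    intro j hj
    rw [hg, cf_add, cf_single, cf_single, if_neg (by omega), if_neg (by omega), add_zero]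
  have c0 : ev (cf (h * g) 0) ≠ 0 := by
    rw [h2, cf_add, cf_single, cf_single]
    simp only [if_true, map_add, map_pow, map_one]
    intro hz
    norm_num at hz
    have e1 : ev y = 0 := by
      linear_combination (1/2) * hz - (1/2) * (ev y ^ 6 + 2 * ev y ^ 5 + 2 * ev y ^ 4 + ev y ^ 3 + 1) * hev
    rw [e1] at hev
    norm_num at hev
  have cneg : ∀ j < 0, cf (h * g) j = 0 := by
    intro j hj
    rw [h2, cf_add, cf_single, cf_single, if_neg (by omega), if_neg (by omega), add_zero]
  have hh : h ≠ 0 := by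
    rintro rfl
    apply c0
    simp [cf]
  obtain ⟨m, hm, hm'⟩ := exists_min h hh
  rcases lt_trichotomy m 0 with h0 | h0 | h0
  · have := cf_min h g m 0 hm' gneg
    rw [add_zero, cneg m h0, g0] at this
    exact mul_ne_zero hm (smul_ne m a ha) this.symm
  · subst h0
    have := cf_min h g 0 0 hm' gneg
    rw [add_zero, g0, show tt 0 = 1 from rfl, one_smul] at this
    rw [this, map_mul, h7, mul_zero] at c0
    exact c0 rfl
  · have := cf_min h g 0 0 (fun i hi => hm' i (by omega)) gneg
    rw [add_zero, hm' 0 h0, zero_mul] at this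
    rw [this, map_zero] at c0
    exact c0 rfl

theorem lemB (y : R) (hy : tt 1 • y ^ 2 = y ^ 3) (ev : R →+* ℂ) (hev : ev y ^ 2 - ev y + 1 = 0)
    (g k h e : SS R)
    (h1 : k * g = SkewMonoidAlgebra.single (tt 1) (1 + y ^ 6) +
      SkewMonoidAlgebra.single (tt 0) (-(1 + y ^ 4 + y ^ 8)))
    (h2 : h * g = SkewMonoidAlgebra.single (tt 0) (1 + y + y ^ 2 + y ^ 3 + y ^ 4 + y ^ 5 + y ^ 6 + y ^ 7 + y ^ 8) +
      SkewMonoidAlgebra.single (tt 2) (-(1 + y + y ^ 2 + y ^ 3)))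
    (h3 : e * (SkewMonoidAlgebra.single (tt 1) 1 - 1) +
      g * (SkewMonoidAlgebra.single (tt 0) (y ^ 4) - 1) = 0) : False := by
  have c1 : ev (cf (k * g) 1) ≠ 0 := by
    rw [h1, cf_add, cf_single, cf_single]
    simp only [if_true, map_add, map_pow, map_one]
    intro hz
    norm_num at hz
    have e1 : (2 : ℂ) = 0 := by
      linear_combination hz - (ev y ^ 4 + ev y ^ 3 - ev y - 1) * hev
    norm_num at e1
  have hk : k ≠ 0 := by
    rintro rfl
    apply c1
    simp [cf]
  have hg : g ≠ 0 := by
    rintro rfl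
    apply c1
    simp [cf]
  have cz : ∀ j, cf (k * g) j ≠ 0 → j = 0 ∨ j = 1 := by
    intro j hj
    by_contra hcon
    apply hj
    rw [h1, cf_add, cf_single, cf_single, if_neg (by omega), if_neg (by omega), add_zero]
  obtain ⟨m, hm, hm'⟩ := exists_min k hk
  obtain ⟨m2, hm2, hm2'⟩ := exists_max k hk
  obtain ⟨n, hn, hn'⟩ := exists_min g hg
  obtain ⟨n2, hn2, hn2'⟩ := exists_max g hg
  have a1 := cz (m + n) (by
    rw [cf_min k g m n hm' hn']; exact mul_ne_zero hm (smul_ne m _ hn))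
  have a2 := cz (m2 + n2) (by
    rw [cf_max k g m2 n2 hm2' hn2']; exact mul_ne_zero hm2 (smul_ne m2 _ hn2))
  have a3 : m ≤ m2 := by
    by_contra hc
    exact hm (hm2' m (by omega))
  have hz : ∀ j, cf g j ≠ 0 → j = n ∨ j = n + 1 := by
    intro j hj
    have b1 : n ≤ j := by
      by_contra hc
      exact hj (hn' j (by omega))
    have b2 : j ≤ n2 := by
      by_contra hc
      exact hj (hn2' j (by omega))
    omega
  set T : SS R := SkewMonoidAlgebra.single (tt n) 1 with hT
  set T' : SS R := SkewMonoidAlgebra.single (tt (-n)) 1 with hT'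
  have hTT : T * T' = 1 := by
    rw [hT, hT', SkewMonoidAlgebra.single_mul_single, ← ofAdd_add]
    rw [add_neg_cancel, smul_one, mul_one]; rfl
  have hc : ∀ i, cf (T' * g) i = tt (-n) • cf g (n + i) := by
    intro i
    unfold cf
    rw [hT', SkewMonoidAlgebra.coeff_single_mul, one_mul]
    congr 2
    change tt (- -n + i) = _
    rw [neg_neg]
  refine lemA y hy ev hev (tt (-n) • cf g n) (tt (-n) • cf g (n + 1)) (smul_ne _ _ hn) (T' * g)
    (h * T) (T' * e) ?_ ?_ ?_
  · apply cf_ext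
    intro i
    rw [hc, cf_add, cf_single, cf_single]
    by_cases i0 : 0 = i
    · subst i0; simp
    by_cases i1 : 1 = i
    · subst i1; simp
    rw [if_neg i0, if_neg i1]
    have : cf g (n + i) = 0 := by
      by_contra hcon
      have := hz _ hcon
      omega
    rw [this]; simp
  · rw [← h2, mul_assoc, ← mul_assoc T, hTT, one_mul]
  · rw [mul_assoc, mul_assoc, ← mul_add, h3, mul_zero]

end Skew

end BSProof

namespace BSProof

abbrev R0 := AddMonoidAlgebra ℤ ℚ

def e0 : ℚ ≃+ ℚ :=
  { toFun := fun q => 3 / 2 * q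
    invFun := fun q => 2 / 3 * q
    left_inv := fun q => by ring
    right_inv := fun q => by ring
    map_add' := fun p q => by ring }

theorem e0_apply (q : ℚ) : e0 q = 3 / 2 * q := rfl

noncomputable def sig : RingAut R0 :=
  AddMonoidAlgebra.mapDomainRingEquiv ℤ e0

noncomputable instance actR0 : MulSemiringAction (Multiplicative ℤ) R0 :=
  MulSemiringAction.compHom R0 (zpowersHom (RingAut R0) sig)

noncomputable def y0 : R0 := AddMonoidAlgebra.single 1 1
noncomputable def y0i : R0 := AddMonoidAlgebra.single (-1) 1

theorem y0_pow (n : ℕ) : y0 ^ n = AddMonoidAlgebra.single (n : ℚ) 1 := by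
  rw [y0, AddMonoidAlgebra.single_pow]; simp

theorem y0_mul : y0 * y0i = 1 := by
  rw [y0, y0i, AddMonoidAlgebra.single_mul_single]
  simp [AddMonoidAlgebra.one_def]

theorem act_y0 : tt 1 • y0 ^ 2 = y0 ^ 3 := by
  change (zpowersHom (RingAut R0) sig (tt 1)) (y0 ^ 2) = y0 ^ 3
  rw [zpowersHom_apply, toAdd_ofAdd, zpow_one, y0_pow, y0_pow, sig]
  rw [AddMonoidAlgebra.mapDomainRingEquiv_single, e0_apply]
  norm_num

noncomputable def om : ℂ := Complex.exp (Real.pi * Complex.I / 3)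

theorem om_eq : om ^ 2 - om + 1 = 0 := by
  have h3 : om ^ 3 = -1 := by
    rw [om, ← Complex.exp_nat_mul, ← Complex.exp_pi_mul_I]
    congr 1
    push_cast
    ring
  have h : (om + 1) * (om ^ 2 - om + 1) = 0 := by linear_combination h3
  refine (mul_eq_zero.1 h).resolve_left ?_
  intro h0
  have hre := congrArg Complex.re h0
  have : om.re = 1 / 2 := by
    rw [om, show (Real.pi * Complex.I / 3 : ℂ) = ((Real.pi / 3 : ℝ) : ℂ) * Complex.I by
      push_cast; ring, Complex.exp_ofReal_mul_I_re, Real.cos_pi_div_three]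
  rw [Complex.add_re, this] at hre
  norm_num at hre

noncomputable def ev0 : R0 →+* ℂ :=
  (AddMonoidAlgebra.lift ℤ ℂ ℚ
    { toFun := fun q => Complex.exp (Real.pi * Complex.I / 3 * (q.toAdd : ℚ))
      map_one' := by simp
      map_mul' := by
        intro p q
        rw [toAdd_mul, ← Complex.exp_add]
        push_cast
        rw [mul_add] }).toRingHom

theorem ev0_y : ev0 y0 = om := by
  simp [ev0, y0, om, AddMonoidAlgebra.lift_single]

abbrev S0 := SS R0

noncomputable def XU : S0ˣ :=
  { val := SkewMonoidAlgebra.single (tt 1) 1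
    inv := SkewMonoidAlgebra.single (tt (-1)) 1
    val_inv := by
      rw [SkewMonoidAlgebra.single_mul_single, smul_one, mul_one]; rfl
    inv_val := by
      rw [SkewMonoidAlgebra.single_mul_single, smul_one, mul_one]; rfl }

noncomputable def YU : S0ˣ :=
  { val := SkewMonoidAlgebra.single (tt 0) y0
    inv := SkewMonoidAlgebra.single (tt 0) y0i
    val_inv := by
      rw [SkewMonoidAlgebra.single_mul_single, show tt 0 = 1 from rfl, one_smul, y0_mul]; rfl
    inv_val := by
      rw [SkewMonoidAlgebra.single_mul_single, show tt 0 = 1 from rfl, one_smul, mul_comm y0i y0, y0_mul]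
      rfl }

theorem single0_pow (r : R0) (n : ℕ) :
    (SkewMonoidAlgebra.single (tt 0) r : S0) ^ n = SkewMonoidAlgebra.single (tt 0) (r ^ n) := by
  induction n with
  | zero => rw [pow_zero, pow_zero]; rfl
  | succ n ih =>
    rw [pow_succ, ih, SkewMonoidAlgebra.single_mul_single, show tt 0 = 1 from rfl, one_smul,
      pow_succ, one_mul]

theorem relU : ∀ r ∈ bsRels, FreeGroup.lift (fun i : Fin 2 => if i = 0 then XU else YU) r = 1 := by
  intro r hr
  rw [Set.mem_singleton_iff.1 hr]
  have h : XU * YU ^ 2 = YU ^ 3 * XU := by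
    apply Units.ext
    rw [Units.val_mul, Units.val_mul, Units.val_pow_eq_pow_val, Units.val_pow_eq_pow_val]
    simp only [XU, YU]
    rw [single0_pow, single0_pow, SkewMonoidAlgebra.single_mul_single,
      SkewMonoidAlgebra.single_mul_single, smul_one, act_y0, one_mul, mul_one, mul_comm]
  simp only [map_mul, map_pow, map_inv, FreeGroup.lift_apply_of]
  rw [mul_inv_eq_one, mul_inv_eq_iff_eq_mul]
  simpa using h

noncomputable def thU : BSGroup →* S0ˣ := PresentedGroup.toGroup relU

theorem thU_x : thU bsX = XU := by
  rw [thU, bsX, PresentedGroup.toGroup.of]; simp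
theorem thU_y : thU bsY = YU := by
  rw [thU, bsY, PresentedGroup.toGroup.of]; simp

noncomputable def th : ZG →+* S0 :=
  (MonoidAlgebra.lift ℤ S0 BSGroup ((Units.coeHom S0).comp thU)).toRingHom

theorem th_o (g : BSGroup) : th (o g) = (thU g : S0) := by
  simp [th, o]
  rw [Algebra.smul_def, map_one, one_mul]

theorem th_X : th X = SkewMonoidAlgebra.single (tt 1) 1 := by
  rw [X, th_o, thU_x]; rfl
theorem th_Y : th Y = SkewMonoidAlgebra.single (tt 0) y0 := by
  rw [Y, th_o, thU_y]; rfl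

theorem y_inf (n : ℕ) (h : bsY ^ n = 1) : n = 0 := by
  have h1 := congrArg th (congrArg o h)
  rw [map_pow, map_pow, map_one, map_one, show o bsY = Y from rfl, th_Y, single0_pow] at h1
  have h2 : y0 ^ n = 1 := SkewMonoidAlgebra.single_injective (1 : Multiplicative ℤ) h1
  rw [y0_pow, AddMonoidAlgebra.one_def] at h2
  have := (AddMonoidAlgebra.single_left_inj one_ne_zero).1 h2
  exact_mod_cast this

theorem hinj (u : ZG) (h : u * (1 - Y ^ 3) = 0) : u = 0 := by
  have h1 : u * MonoidAlgebra.single (bsY ^ 3) 1 = u := by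
    rw [mul_sub, mul_one, sub_eq_zero, Y, ← map_pow] at h
    exact h.symm
  have h2 : ∀ g, u.coeff (g * (bsY ^ 3)⁻¹) = u.coeff g := by
    intro g
    have := congrArg (fun v : ZG => v.coeff g) h1
    simp only [MonoidAlgebra.coeff_mul_single_apply, mul_one] at this
    exact this
  have h3 : ∀ (n : ℕ) g, u.coeff (g * ((bsY ^ 3)⁻¹) ^ n) = u.coeff g := by
    intro n
    induction n with
    | zero => intro g; simp
    | succ n ih => intro g; rw [pow_succ, ← mul_assoc, h2, ih]
  by_contra hu
  have hu' : u.coeff ≠ 0 := fun h => hu (MonoidAlgebra.coeff_eq_zero.1 h)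
  obtain ⟨g, hg⟩ := Finsupp.ne_iff.1 hu'
  have hinj : Function.Injective (fun n : ℕ => g * ((bsY ^ 3)⁻¹) ^ n) := by
    have key : ∀ m n : ℕ, m ≤ n → g * ((bsY ^ 3)⁻¹) ^ m = g * ((bsY ^ 3)⁻¹) ^ n → m = n := by
      intro m n hmn hh
      obtain ⟨k, rfl⟩ := Nat.exists_eq_add_of_le hmn
      have h4 := mul_left_cancel hh
      rw [pow_add, left_eq_mul, inv_pow, inv_eq_one, ← pow_mul] at h4
      have := y_inf _ h4
      omega
    intro m n hh
    rcases le_total m n with h | h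
    · exact key m n h hh
    · exact (key n m h hh.symm).symm
  have hfin : (Set.range (fun n : ℕ => g * ((bsY ^ 3)⁻¹) ^ n)).Finite := by
    apply Set.Finite.subset u.coeff.support.finite_toSet
    rintro _ ⟨n, rfl⟩
    rw [Finset.mem_coe, Finsupp.mem_support_iff]
    change u.coeff (g * ((bsY ^ 3)⁻¹) ^ n) ≠ 0
    rw [h3]
    exact hg
  exact Set.infinite_range_of_injective hinj hfin

theorem th_q : th (D 0 1 fq) = SkewMonoidAlgebra.single (tt 1) (1 + y0 ^ 6) +
      SkewMonoidAlgebra.single (tt 0) (-(1 + y0 ^ 4 + y0 ^ 8)) := by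
  rw [D_q, mul_one, mul_one, mul_add, mul_one, relZ4]
  simp only [map_sub, map_add, map_mul, map_pow, map_one, th_X, th_Y]
  simp only [single0_pow, SkewMonoidAlgebra.single_mul_single, smul_one, mul_one,
    SkewMonoidAlgebra.single_add, SkewMonoidAlgebra.single_neg]
  rw [show tt 0 * tt 1 = tt 1 from rfl, show (1 : S0) = SkewMonoidAlgebra.single (tt 0) 1 from rfl]
  abel

theorem th_s : th (D 0 1 fs) = SkewMonoidAlgebra.single (tt 0)
      (1 + y0 + y0 ^ 2 + y0 ^ 3 + y0 ^ 4 + y0 ^ 5 + y0 ^ 6 + y0 ^ 7 + y0 ^ 8) +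
      SkewMonoidAlgebra.single (tt 2) (-(1 + y0 + y0 ^ 2 + y0 ^ 3)) := by
  have : D 0 1 fs = (1 + Y + Y ^ 2 + Y ^ 3 + Y ^ 4 + Y ^ 5 + Y ^ 6 + Y ^ 7 + Y ^ 8) -
      (1 + Y + Y ^ 2 + Y ^ 3) * (X * X) := by
    rw [D_s, D_w]
    noncomm_ring
  rw [this]
  simp only [map_sub, map_add, map_mul, map_pow, map_one, th_X, th_Y]
  rw [show (1 : S0) = SkewMonoidAlgebra.single (tt 0) 1 from rfl]
  simp only [add_mul, single0_pow, SkewMonoidAlgebra.single_mul_single, smul_one, mul_one,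
    SkewMonoidAlgebra.single_add, SkewMonoidAlgebra.single_neg]
  rw [show tt 0 * (tt 1 * tt 1) = tt 2 from rfl]
  abel

theorem noncyclic [Module (MonoidAlgebra ℤ BSGroup) (Additive (Abelianization ↥bsPi.ker))]
    (hact : Hact) (m : M) (hm : Submodule.span ZG {m} = ⊤) : False := by
  have hs : ∀ r : ↥bsPi.ker, ∃ u : ZG,
      u * Phi hact 0 1 m = D 0 1 (r : FreeGroup (Fin 2)) := by
    intro r
    have : cl r ∈ Submodule.span ZG {m} := hm ▸ Submodule.mem_top
    obtain ⟨u, hu⟩ := Submodule.mem_span_singleton.1 this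
    refine ⟨u, ?_⟩
    rw [← Phi_cl hact, ← hu, map_smul, smul_eq_mul]
  obtain ⟨k, hk⟩ := hs kq
  obtain ⟨h, hh⟩ := hs ks
  have hfund : Phi hact 1 0 m * (X - 1) + Phi hact 0 1 m * (Y ^ 4 - 1) = 0 := by
    obtain ⟨r, rfl⟩ := cl_surj m
    rw [Phi_cl, Phi_cl, D_fund, MonoidHom.mem_ker.1 r.2, map_one, sub_self]
  refine lemB y0 act_y0 ev0 (by rw [ev0_y]; exact om_eq) (th (Phi hact 0 1 m)) (th k) (th h)
    (th (Phi hact 1 0 m)) ?_ ?_ ?_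
  · rw [← map_mul, hk, ← th_q]; rfl
  · rw [← map_mul, hh, ← th_s]; rfl
  · rw [← th_X, ← single0_pow, ← th_Y, ← map_one th, ← map_pow, ← map_sub, ← map_sub, ← map_mul,
      ← map_mul, ← map_add, hfund, map_zero]

end BSProof

/-- The relation module `M = M(G,{x,z})`, `z = y⁴` (the abelianization of
`R = ker (F(a,b) → G)` with `G` acting by conjugation) is stably free non-free
of rank one: `M ⊕ ℤG ≅ ℤG ⊕ ℤG` as `ℤG`-modules, but `M` is not isomorphic to
`ℤG`; indeed `M` is not even a cyclic `ℤG`-module. -/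
theorem relationModule_x_y4_stablyFree_nonFree
    [Module (MonoidAlgebra ℤ BSGroup) (Additive (Abelianization ↥bsPi.ker))]
    (hact : ∀ (f : FreeGroup (Fin 2)) (r r' : ↥bsPi.ker),
      (r' : FreeGroup (Fin 2)) = f * ↑r * f⁻¹ →
      MonoidAlgebra.of ℤ BSGroup (bsPi f) • Additive.ofMul (Abelianization.of r) =
        Additive.ofMul (Abelianization.of r')) :
    Nonempty ((Additive (Abelianization ↥bsPi.ker) × MonoidAlgebra ℤ BSGroup)
        ≃ₗ[MonoidAlgebra ℤ BSGroup]
      (MonoidAlgebra ℤ BSGroup × MonoidAlgebra ℤ BSGroup)) ∧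
    ¬ Nonempty (Additive (Abelianization ↥bsPi.ker)
        ≃ₗ[MonoidAlgebra ℤ BSGroup] MonoidAlgebra ℤ BSGroup) ∧
    ¬ ∃ m : Additive (Abelianization ↥bsPi.ker),
        Submodule.span (MonoidAlgebra ℤ BSGroup) {m} = ⊤ := by

  have h : BSProof.Hact := fun f r => hact f r (BSProof.cj f r) rfl
  have hc : ¬ ∃ m : Additive (Abelianization ↥bsPi.ker),
        Submodule.span (MonoidAlgebra ℤ BSGroup) {m} = ⊤ :=
    fun ⟨m, hm⟩ => BSProof.noncyclic h m hm
  refine ⟨BSProof.stable h BSProof.hinj, ?_, hc⟩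
  rintro ⟨e⟩
  apply hc
  refine ⟨e.symm 1, ?_⟩
  rw [eq_top_iff]
  intro m _
  refine Submodule.mem_span_singleton.2 ⟨e m, ?_⟩
  rw [← map_smul, smul_eq_mul, mul_one, e.symm_apply_apply]
end

section
/- In the presented group A = ⟨ u_i (i ∈ ℤ) | u_{i+1}² = u_i³ (i ∈ ℤ) ⟩, the commutator [u₀, u₁] = u₀ u₁ u₀⁻¹ u₁⁻¹ is a nontrivial element. -/
open scoped commutatorElement

/-- The relators `u_{i+1}² u_i⁻³` (`i ∈ ℤ`) in the free group on generators
`u_i` indexed by `ℤ`. -/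
def aRels : Set (FreeGroup ℤ) :=
  Set.range fun i : ℤ => FreeGroup.of (i + 1) ^ 2 * (FreeGroup.of i ^ 3)⁻¹

/-- The group `A = ⟨ u_i (i ∈ ℤ) | u_{i+1}² = u_i³ ⟩`. -/
abbrev AGroup := PresentedGroup aRels

/-- Scalars `exp(2πi (3/2)^i / 3)`. -/
noncomputable def aSc (i : ℤ) : ℂˣ :=
  Units.mk0 (Complex.exp (2 * Real.pi * Complex.I / 3 * (3 / 2 : ℂ) ^ i)) (Complex.exp_ne_zero _)

lemma aSc_rel (i : ℤ) : aSc (i + 1) ^ 2 = aSc i ^ 3 := by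
  ext
  simp only [aSc, Units.val_pow_eq_pow_val, Units.val_mk0, ← Complex.exp_nat_mul]
  rw [zpow_add_one₀ (by norm_num)]
  congr 1
  push_cast
  ring

lemma aSc_zero : ((aSc 0 : ℂˣ) : ℂ) = Complex.exp (2 * Real.pi * Complex.I / 3) := by
  simp [aSc]

lemma aSc_one : ((aSc 1 : ℂˣ) : ℂ) = -1 := by
  rw [← Complex.exp_pi_mul_I]
  simp only [aSc, Units.val_mk0, zpow_one]
  congr 1
  ring

lemma aSc_one_sq : aSc 1 ^ 2 = 1 := by
  ext
  simp [aSc_one]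

lemma aSc_zero_ne : ((aSc 0 : ℂˣ) : ℂ) ≠ 1 := by
  rw [aSc_zero]
  have h := (Complex.isPrimitiveRoot_exp 3 (by norm_num)).ne_one (by norm_num)
  exact_mod_cast h

/-- Affine permutations of `ℂ`. -/
noncomputable def aPerm (i : ℤ) : Equiv.Perm ℂ :=
  if 1 ≤ i then MulAction.toPermHom ℂˣ ℂ (aSc i)
  else Equiv.addRight (1 : ℂ) * MulAction.toPermHom ℂˣ ℂ (aSc i) * (Equiv.addRight (1 : ℂ))⁻¹

lemma aPerm_rel (i : ℤ) : aPerm (i + 1) ^ 2 = aPerm i ^ 3 := by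
  unfold aPerm
  rcases lt_trichotomy i 0 with h | h | h
  · rw [if_neg (by omega), if_neg (by omega), conj_pow, conj_pow, ← map_pow, ← map_pow, aSc_rel]
  · subst h
    have h0 : aSc 0 ^ 3 = 1 := by rw [← aSc_rel, zero_add, aSc_one_sq]
    rw [if_pos (by omega), if_neg (by omega), conj_pow, ← map_pow, ← map_pow, zero_add,
      aSc_one_sq, h0, map_one, mul_one, mul_inv_cancel]
  · rw [if_pos (by omega), if_pos (by omega), ← map_pow, ← map_pow, aSc_rel]

/-- In `A = ⟨ u_i (i ∈ ℤ) | u_{i+1}² = u_i³ ⟩` the commutator `[u₀, u₁]` is a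
nontrivial element. -/
theorem commutator_u0_u1_ne_one :
    ⁅(PresentedGroup.of (0 : ℤ) : AGroup), PresentedGroup.of (1 : ℤ)⁆ ≠ (1 : AGroup) := by
  intro h
  have hr : ∀ r ∈ aRels, FreeGroup.lift aPerm r = 1 := by
    rintro _ ⟨i, rfl⟩
    simp [aPerm_rel]
  have h2 := congrArg (PresentedGroup.toGroup hr) h
  rw [map_commutatorElement, map_one, commutatorElement_eq_one_iff_mul_comm,
    PresentedGroup.toGroup.of, PresentedGroup.toGroup.of] at h2
  have h3 := congrArg (fun p : Equiv.Perm ℂ => p 0) h2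
  simp [aPerm, Units.smul_def, aSc_one, Equiv.Perm.inv_def] at h3
  apply aSc_zero_ne
  linear_combination (-1 / 2 : ℂ) * h3
end

section
/- Let F = F(a,b) be the free group on two generators, let c = a b a⁻¹ b⁻¹, d = a⁻³ b², and e = a⁻¹ (b a⁻¹)². Let φ : F → ℤ be the homomorphism with φ(a) = 2 and φ(b) = 3. Then for every subset S ⊆ ker φ, the normal closure of S ∪ {c, d} in F equals the normal closure of {e} in F. -/
/-- `c = a b a⁻¹ b⁻¹` in the free group on two generators `a = 0`, `b = 1`. -/
def wordC : FreeGroup (Fin 2) :=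
  FreeGroup.of 0 * FreeGroup.of 1 * (FreeGroup.of 0)⁻¹ * (FreeGroup.of 1)⁻¹

/-- `d = a⁻³ b²`. -/
def wordD : FreeGroup (Fin 2) := (FreeGroup.of 0 ^ 3)⁻¹ * FreeGroup.of 1 ^ 2

/-- `e = a⁻¹ (b a⁻¹)²`. -/
def wordE : FreeGroup (Fin 2) :=
  (FreeGroup.of 0)⁻¹ * (FreeGroup.of 1 * (FreeGroup.of 0)⁻¹) ^ 2

/-- The homomorphism `φ : F(a,b) → ℤ` with `φ(a) = 2`, `φ(b) = 3`
(written multiplicatively). -/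
def phiTo2and3 : FreeGroup (Fin 2) →* Multiplicative ℤ :=
  FreeGroup.lift (fun i => Multiplicative.ofAdd (if i = 0 then (2 : ℤ) else 3))

theorem ker_le_of_wordE_mem (N : Subgroup (FreeGroup (Fin 2))) [N.Normal] (h : wordE ∈ N) :
    phiTo2and3.ker ≤ N := by
  have h1 : (QuotientGroup.mk' N) wordE = 1 := (QuotientGroup.eq_one_iff _).2 h
  set A := QuotientGroup.mk' N (FreeGroup.of 0) with hA
  set B := QuotientGroup.mk' N (FreeGroup.of 1) with hB
  have h2 : A⁻¹ * (B * A⁻¹) ^ 2 = 1 := by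
    rw [← h1, wordE, map_mul, map_pow, map_mul, map_inv]
  have hA2 : (B * A⁻¹) ^ 2 = A := by
    rw [inv_mul_eq_one] at h2
    exact h2.symm
  have hB3 : (B * A⁻¹) ^ 3 = B := by
    rw [pow_succ', hA2]; group
  have key : (zpowersHom _ (B * A⁻¹)).comp phiTo2and3 = QuotientGroup.mk' N := by
    apply FreeGroup.ext_hom
    intro i
    fin_cases i
    · simp only [phiTo2and3, MonoidHom.comp_apply, FreeGroup.lift_apply_of]
      exact hA2
    · simp only [phiTo2and3, MonoidHom.comp_apply, FreeGroup.lift_apply_of]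
      exact hB3
  intro x hx
  have : QuotientGroup.mk' N x = 1 := by
    rw [← key, MonoidHom.comp_apply, MonoidHom.mem_ker.1 hx, map_one]
  exact (QuotientGroup.eq_one_iff _).1 this

theorem wordE_mem_of_cd (N : Subgroup (FreeGroup (Fin 2))) [N.Normal] (hc : wordC ∈ N)
    (hd : wordD ∈ N) : wordE ∈ N := by
  have h1 : (QuotientGroup.mk' N) wordC = 1 := (QuotientGroup.eq_one_iff _).2 hc
  have h2 : (QuotientGroup.mk' N) wordD = 1 := (QuotientGroup.eq_one_iff _).2 hd
  suffices h : (QuotientGroup.mk' N) wordE = 1 from (QuotientGroup.eq_one_iff _).1 h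
  simp only [wordC, wordD, wordE, map_mul, map_pow, map_inv] at h1 h2 ⊢
  generalize QuotientGroup.mk' N (FreeGroup.of 0) = A at *
  generalize QuotientGroup.mk' N (FreeGroup.of 1) = B at *
  have hAB : Commute B A := by
    rw [mul_inv_eq_one, mul_inv_eq_iff_eq_mul] at h1
    exact h1.symm
  rw [inv_mul_eq_one] at h2
  rw [hAB.inv_right.mul_pow, ← h2]
  group

/-- For every set `S` of words in the kernel of `φ : F(a,b) → ℤ`, `a ↦ 2`,
`b ↦ 3`, the normal closure of `S ∪ {c, d}` equals the normal closure of `{e}`,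
where `c = a b a⁻¹ b⁻¹`, `d = a⁻³ b²` and `e = a⁻¹ (b a⁻¹)²`. -/
theorem normalClosure_union_cd_eq_normalClosure_e
    (S : Set (FreeGroup (Fin 2))) (hS : S ⊆ (phiTo2and3.ker : Set (FreeGroup (Fin 2)))) :
    Subgroup.normalClosure (S ∪ {wordC, wordD}) = Subgroup.normalClosure {wordE} := by
  have hC : phiTo2and3 wordC = 1 := by
    simp only [wordC, map_mul, map_inv]
    rw [mul_comm (phiTo2and3 _)]; group
  have hD : phiTo2and3 wordD = 1 := by
    simp only [wordD, phiTo2and3, map_mul, map_inv, map_pow, FreeGroup.lift_apply_of]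
    rfl
  have hE : phiTo2and3 wordE = 1 := by
    simp only [wordE, phiTo2and3, map_mul, map_inv, map_pow, FreeGroup.lift_apply_of]
    rfl
  have e1 : Subgroup.normalClosure (S ∪ {wordC, wordD}) = phiTo2and3.ker := by
    apply le_antisymm
    · apply Subgroup.normalClosure_le_normal
      rintro x (hx | rfl | rfl)
      · exact hS hx
      · exact hC
      · exact hD
    · apply ker_le_of_wordE_mem
      apply wordE_mem_of_cd <;> apply Subgroup.subset_normalClosure <;> simp
  have e2 : Subgroup.normalClosure {wordE} = phiTo2and3.ker := by
    apply le_antisymm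
    · apply Subgroup.normalClosure_le_normal
      rintro x rfl
      exact hE
    · apply ker_le_of_wordE_mem
      apply Subgroup.subset_normalClosure; simp
  rw [e1, e2]
end

section
/- Let F be the free group on a family x, let R be a normal subgroup of F, and set G = F/R. Suppose s is a subset of R such that the images {s[R,R] : s ∈ s} generate the relation module M(G,x) = R/[R,R] as a ℤG-module. Let S be the normal closure of s in F and let G̃ = F/S, so that there is a natural epimorphism G̃ → G with kernel P = R/S. Then P is perfect, i.e., P/[P,P] = 0. -/
/-- Let `F` be a free group, `R ⊴ F` normal, `G = F/R`.  Suppose `s ⊆ R` is a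
set whose images `s[R,R]` generate the relation module `M(G,x) = R/[R,R]`
(over `ℤG`, with `G` acting by conjugation).  Let `G̃ = F / ⟪s⟫` and let
`φ : G̃ → G` be the natural epimorphism.  Then its kernel `P = R/⟪s⟫` is
perfect, i.e. `P/[P,P] = 0`. -/
theorem kernel_of_natural_epimorphism_is_perfect
    {α : Type} (R : Subgroup (FreeGroup α)) [R.Normal]
    (s : Set (FreeGroup α)) (hs : s ⊆ (R : Set (FreeGroup α)))
    [Module (MonoidAlgebra ℤ (FreeGroup α ⧸ R)) (Additive (Abelianization ↥R))]
    (hact : ∀ (f : FreeGroup α) (r r' : ↥R), (r' : FreeGroup α) = f * ↑r * f⁻¹ →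
      MonoidAlgebra.of ℤ (FreeGroup α ⧸ R) (QuotientGroup.mk f) •
        Additive.ofMul (Abelianization.of r) = Additive.ofMul (Abelianization.of r'))
    (hgen : Submodule.span (MonoidAlgebra ℤ (FreeGroup α ⧸ R))
        {m : Additive (Abelianization ↥R) | ∃ w : ↥R, (w : FreeGroup α) ∈ s ∧
          m = Additive.ofMul (Abelianization.of w)} = ⊤)
    (φ : (FreeGroup α ⧸ Subgroup.normalClosure s) →* FreeGroup α ⧸ R)
    (hφ : ∀ w : FreeGroup α, φ (QuotientGroup.mk w) = QuotientGroup.mk w) :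
    commutator ↥φ.ker = ⊤ := by
  have key : ∀ m : Additive (Abelianization ↥R), ∃ w : ↥R,
      (w : FreeGroup α) ∈ Subgroup.normalClosure s ∧
        m = Additive.ofMul (Abelianization.of w) := by
    intro m
    have hm : m ∈ Submodule.span (MonoidAlgebra ℤ (FreeGroup α ⧸ R))
        {m : Additive (Abelianization ↥R) | ∃ w : ↥R, (w : FreeGroup α) ∈ s ∧
          m = Additive.ofMul (Abelianization.of w)} := by
      rw [hgen]; trivial
    induction hm using Submodule.span_induction with
    | mem x hx =>
      obtain ⟨w, hw, rfl⟩ := hx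
      exact ⟨w, Subgroup.subset_normalClosure hw, rfl⟩
    | zero => exact ⟨1, Subgroup.one_mem _, by rw [map_one]; rfl⟩
    | add x y _ _ hx hy =>
      obtain ⟨w, hw, rfl⟩ := hx
      obtain ⟨v, hv, rfl⟩ := hy
      exact ⟨w * v, Subgroup.mul_mem _ hw hv, by rw [map_mul]; rfl⟩
    | smul a x _ hx =>
      obtain ⟨w, hw, rfl⟩ := hx
      induction a using MonoidAlgebra.induction_on with
      | of g =>
        obtain ⟨f, rfl⟩ := QuotientGroup.mk_surjective g
        refine ⟨⟨f * w * f⁻¹, ‹R.Normal›.conj_mem _ w.2 f⟩, ?_, hact f w _ rfl⟩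
        exact Subgroup.normalClosure_normal.conj_mem _ hw f
      | add a b ha hb =>
        obtain ⟨u, hu, eu⟩ := ha
        obtain ⟨v, hv, ev⟩ := hb
        exact ⟨u * v, Subgroup.mul_mem _ hu hv, by rw [add_smul, eu, ev, map_mul]; rfl⟩
      | smul n a ha =>
        obtain ⟨u, hu, eu⟩ := ha
        refine ⟨u ^ n, Subgroup.zpow_mem _ hu n, ?_⟩
        rw [smul_assoc, eu, map_zpow]; rfl
  have hT : ∀ r : ↥R, (QuotientGroup.mk' (Subgroup.normalClosure s)).comp R.subtype r ∈ φ.ker := by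
    intro r
    rw [MonoidHom.mem_ker]
    exact (hφ r).trans ((QuotientGroup.eq_one_iff _).2 r.2)
  let T : ↥R →* ↥φ.ker :=
    ((QuotientGroup.mk' (Subgroup.normalClosure s)).comp R.subtype).codRestrict φ.ker hT
  rw [eq_top_iff]
  rintro ⟨p, hp⟩ -
  obtain ⟨f, rfl⟩ := QuotientGroup.mk_surjective p
  have hf : f ∈ R := by
    rw [MonoidHom.mem_ker, hφ] at hp
    exact (QuotientGroup.eq_one_iff _).1 hp
  obtain ⟨w, hw, e⟩ := key (Additive.ofMul (Abelianization.of ⟨f, hf⟩))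
  have e' : Abelianization.of (⟨f, hf⟩ : ↥R) = Abelianization.of w := e
  have hc : (⟨f, hf⟩ : ↥R) * w⁻¹ ∈ commutator ↥R := by
    rw [← Abelianization.ker_of, MonoidHom.mem_ker, map_mul, map_inv, e', mul_inv_cancel]
  have hw1 : T w = 1 := Subtype.ext ((QuotientGroup.eq_one_iff _).2 hw)
  have h2 : T (⟨f, hf⟩ * w⁻¹) ∈ commutator ↥φ.ker := by
    have h3 := Subgroup.mem_map_of_mem T hc
    rw [commutator_def, Subgroup.map_commutator] at h3
    exact Subgroup.commutator_mono le_top le_top h3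
  rw [map_mul, map_inv, hw1, inv_one, mul_one] at h2
  exact h2
end

section
/- Let G = ⟨x, y | x y² x⁻¹ = y³⟩, let H be the normal closure of y⁴ in G, let F be the free group on generators z_i (i ∈ ℤ), and let π′ : F → H be the epimorphism sending z_i ↦ x^i y⁴ x^{-i}, with kernel R. Suppose r ∈ R satisfies ∂r/∂z_i = 0 in ℤH for all i outside {0, 1, …, n}. Then there exist finitely many elements s₁, …, s_m ∈ R, each lying in the subgroup of F generated by z₀, …, z_n, and elements f₁, …, f_m ∈ F, such that r is congruent to the product f₁ s₁ f₁⁻¹ · f₂ s₂ f₂⁻¹ ⋯ f_m s_m f_m⁻¹ modulo the commutator subgroup [R,R]. -/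
/-- `H`, the normal closure of `y⁴` in `G`. -/
def bsH : Subgroup BSGroup := Subgroup.normalClosure {bsY ^ 4}

section FoxGeneral

variable {ι H : Type} [DecidableEq ι] [Group H] (π : FreeGroup ι →* H)

theorem fox_exists_section (hs : Function.Surjective π) (E : Subgroup (FreeGroup ι)) :
    ∃ σ : H → FreeGroup ι, σ 1 = 1 ∧ (∀ h, π (σ h) = h) ∧
      ∀ h h', h⁻¹ * h' ∈ E.map π → (σ h)⁻¹ * σ h' ∈ E := by
  choose f hf using hs
  have hw : ∀ h : H, ∃ w ∈ E, π w = ((QuotientGroup.mk h : H ⧸ E.map π).out)⁻¹ * h := by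
    intro h
    obtain ⟨k, hk⟩ := QuotientGroup.mk_out_eq_mul (E.map π) h
    have : ((QuotientGroup.mk h : H ⧸ E.map π).out)⁻¹ * h ∈ E.map π := by
      rw [hk]
      simp
    exact this
  choose w hwE hw using hw
  let s : H → FreeGroup ι := fun h => f ((QuotientGroup.mk h : H ⧸ E.map π).out) * w h
  have hsπ : ∀ h, π (s h) = h := by
    intro h
    simp [s, hf, hw]
  refine ⟨fun h => (s 1)⁻¹ * s h, by simp, fun h => by simp [hsπ], ?_⟩
  intro h h' hh
  have e : (QuotientGroup.mk h : H ⧸ E.map π) = QuotientGroup.mk h' := QuotientGroup.eq.2 hh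
  have : ((s 1)⁻¹ * s h)⁻¹ * ((s 1)⁻¹ * s h') = (w h)⁻¹ * w h' := by
    simp only [s, e]
    group
  rw [this]
  exact E.mul_mem (E.inv_mem (hwE _)) (hwE _)

/-- The class of `σ(h) w σ(h π(w))⁻¹` in the abelianization of the kernel. -/
noncomputable def foxC (σ : H → FreeGroup ι) (hσ : ∀ h, π (σ h) = h) (h : H)
    (w : FreeGroup ι) : Abelianization π.ker :=
  Abelianization.of ⟨σ h * w * (σ (h * π w))⁻¹, by simp [MonoidHom.mem_ker, hσ]⟩

theorem foxC_mul (σ : H → FreeGroup ι) (hσ : ∀ h, π (σ h) = h) (h : H) (u v : FreeGroup ι) :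
    foxC π σ hσ h (u * v) = foxC π σ hσ h u * foxC π σ hσ (h * π u) v := by
  unfold foxC
  rw [← map_mul]
  congr 1
  apply Subtype.ext
  simp [mul_assoc]

theorem foxC_one (σ : H → FreeGroup ι) (hσ : ∀ h, π (σ h) = h) (h : H) :
    foxC π σ hσ h 1 = 1 := by
  have := foxC_mul π σ hσ h 1 1
  simpa using this

/-- The additive map `ℤH → R_ab` attached to the `i`-th generator. -/
noncomputable def foxPhi (σ : H → FreeGroup ι) (hσ : ∀ h, π (σ h) = h) (i : ι) :
    MonoidAlgebra ℤ H →+ Additive (Abelianization π.ker) :=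
  (Finsupp.linearCombination ℤ
    (fun h => Additive.ofMul (foxC π σ hσ h (FreeGroup.of i)))).toAddMonoidHom.comp
    (MonoidAlgebra.coeffAddEquiv (R := ℤ) (M := H)).toAddMonoidHom

theorem foxPhi_of (σ : H → FreeGroup ι) (hσ : ∀ h, π (σ h) = h) (i : ι) (h : H) :
    foxPhi π σ hσ i (MonoidAlgebra.of ℤ H h) =
      Additive.ofMul (foxC π σ hσ h (FreeGroup.of i)) := by
  simp [foxPhi, MonoidAlgebra.of_apply]

theorem foxPhi_mem (σ : H → FreeGroup ι) (hσ : ∀ h, π (σ h) = h) (i : ι)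
    (N : AddSubgroup (Additive (Abelianization π.ker)))
    (hN : ∀ h, Additive.ofMul (foxC π σ hσ h (FreeGroup.of i)) ∈ N) (x : MonoidAlgebra ℤ H) :
    foxPhi π σ hσ i x ∈ N := by
  have : foxPhi π σ hσ i x = x.coeff.sum
    (fun h a => a • Additive.ofMul (foxC π σ hσ h (FreeGroup.of i))) := rfl
  rw [this]
  exact AddSubgroup.sum_mem _ fun h _ => N.zsmul_mem (hN h) _

theorem fox_sum (σ : H → FreeGroup ι) (hσ : ∀ h, π (σ h) = h)
    (D : ι → FreeGroup ι → MonoidAlgebra ℤ H)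
    (hD1 : ∀ i j, D i (FreeGroup.of j) = if j = i then 1 else 0)
    (hD2 : ∀ i (u v : FreeGroup ι), D i (u * v) = D i u + MonoidAlgebra.of ℤ H (π u) * D i v)
    (w : FreeGroup ι) :
    ∃ S : Finset ι, ∀ T, S ⊆ T → ∀ h : H,
      ∑ i ∈ T, foxPhi π σ hσ i (MonoidAlgebra.of ℤ H h * D i w) =
        Additive.ofMul (foxC π σ hσ h w) := by
  have hone : ∀ i, D i 1 = 0 := by
    intro i
    have := hD2 i 1 1
    rw [mul_one, map_one, map_one, one_mul] at this
    simpa using this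
  induction w using FreeGroup.induction_on with
  | C1 =>
    refine ⟨∅, fun T _ h => ?_⟩
    simp [hone, foxC_one]
  | of j =>
    refine ⟨{j}, fun T hT h => ?_⟩
    have hj : j ∈ T := hT (by simp)
    rw [Finset.sum_eq_single_of_mem j hj]
    · rw [hD1, if_pos rfl, mul_one, foxPhi_of]
    · intro b _ hb
      rw [hD1, if_neg hb.symm, mul_zero, map_zero]
  | inv_of j ih =>
    obtain ⟨S, hS⟩ := ih
    refine ⟨S, fun T hT h => ?_⟩
    have h1 := hS T hT (h * (π (FreeGroup.of j))⁻¹)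
    have h2 : ∀ i, MonoidAlgebra.of ℤ H h * D i (FreeGroup.of j)⁻¹ =
        -(MonoidAlgebra.of ℤ H (h * (π (FreeGroup.of j))⁻¹) * D i (FreeGroup.of j)) := by
      intro i
      have h3 := hD2 i (FreeGroup.of j) (FreeGroup.of j)⁻¹
      rw [mul_inv_cancel, hone] at h3
      rw [eq_neg_of_add_eq_zero_left h3.symm, mul_neg, neg_neg, ← mul_assoc, ← map_mul]
      simp
    simp only [h2, map_neg, Finset.sum_neg_distrib, h1]
    have h4 := foxC_mul π σ hσ (h * (π (FreeGroup.of j))⁻¹) (FreeGroup.of j) (FreeGroup.of j)⁻¹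
    rw [mul_inv_cancel, foxC_one, inv_mul_cancel_right] at h4
    rw [← ofMul_inv, inv_eq_of_mul_eq_one_right h4.symm]
  | mul u v hu hv =>
    obtain ⟨S, hS⟩ := hu
    obtain ⟨S', hS'⟩ := hv
    refine ⟨S ∪ S', fun T hT h => ?_⟩
    have h1 := hS T (Finset.union_subset_left hT) h
    have h2 := hS' T (Finset.union_subset_right hT) (h * π u)
    simp only [hD2, mul_add, map_add, Finset.sum_add_distrib, ← mul_assoc, ← map_mul, h1]
    simp only [map_mul, foxC_mul, ofMul_mul] at h2 ⊢
    rw [h2]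

theorem fox_general (hs : Function.Surjective π)
    (D : ι → FreeGroup ι → MonoidAlgebra ℤ H)
    (hD1 : ∀ i j, D i (FreeGroup.of j) = if j = i then 1 else 0)
    (hD2 : ∀ i (u v : FreeGroup ι), D i (u * v) = D i u + MonoidAlgebra.of ℤ H (π u) * D i v)
    (A : Set ι) (r : FreeGroup ι) (hr : r ∈ π.ker) (hfox : ∀ i, i ∉ A → D i r = 0) :
    ∃ l : List (FreeGroup ι × FreeGroup ι),
      (∀ p ∈ l, p.2 ∈ π.ker ∧ p.2 ∈ Subgroup.closure (FreeGroup.of '' A)) ∧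
      r⁻¹ * (l.map fun p => p.1 * p.2 * p.1⁻¹).prod ∈ ⁅π.ker, π.ker⁆ := by
  set E := Subgroup.closure (FreeGroup.of '' A) with hE
  obtain ⟨σ, hσ1, hσ, hσE⟩ := fox_exists_section π hs E
  let N : Subgroup (FreeGroup ι) :=
    { carrier := {g | ∃ l : List (FreeGroup ι × FreeGroup ι),
        (∀ p ∈ l, p.2 ∈ π.ker ∧ p.2 ∈ E) ∧ (l.map fun p => p.1 * p.2 * p.1⁻¹).prod = g}
      one_mem' := ⟨[], by simp, by simp⟩
      mul_mem' := by
        rintro a b ⟨l, hl, rfl⟩ ⟨l', hl', rfl⟩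
        refine ⟨l ++ l', ?_, by simp⟩
        intro p hp
        rcases List.mem_append.1 hp with hp | hp
        exacts [hl p hp, hl' p hp]
      inv_mem' := by
        rintro a ⟨l, hl, rfl⟩
        refine ⟨(l.map fun p => (p.1, p.2⁻¹)).reverse, ?_, ?_⟩
        · intro p hp
          simp only [List.mem_reverse, List.mem_map] at hp
          obtain ⟨q, hq, rfl⟩ := hp
          exact ⟨inv_mem (hl q hq).1, inv_mem (hl q hq).2⟩
        · rw [List.prod_inv_reverse, List.map_reverse, List.map_map, List.map_map]
          congr 2
          apply List.map_congr_left
          intro p _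
          simp [mul_assoc] }
  let M : AddSubgroup (Additive (Abelianization π.ker)) :=
    Subgroup.toAddSubgroup ((N.subgroupOf π.ker).map Abelianization.of)
  obtain ⟨S, hS⟩ := fox_sum π σ hσ D hD1 hD2 r
  have h1 := hS S subset_rfl 1
  have h2 : Additive.ofMul (foxC π σ hσ 1 r) ∈ M := by
    rw [← h1]
    refine AddSubgroup.sum_mem _ fun i _ => ?_
    by_cases hi : i ∈ A
    · refine foxPhi_mem π σ hσ i M (fun h => ?_) _
      change foxC π σ hσ h (FreeGroup.of i) ∈ (N.subgroupOf π.ker).map Abelianization.of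
      refine Subgroup.mem_map.2 ⟨_, ?_, rfl⟩
      rw [Subgroup.mem_subgroupOf]
      have hiE : FreeGroup.of i ∈ E := Subgroup.subset_closure ⟨i, hi, rfl⟩
      have h3 := hσE (h * π (FreeGroup.of i)) h (by
        refine ⟨(FreeGroup.of i)⁻¹, inv_mem hiE, by simp⟩)
      refine ⟨[(σ h, FreeGroup.of i * ((σ (h * π (FreeGroup.of i)))⁻¹ * σ h))], ?_, ?_⟩
      · intro p hp
        rw [List.mem_singleton] at hp
        subst hp
        exact ⟨by simp [MonoidHom.mem_ker, hσ], mul_mem hiE h3⟩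
      · simp [mul_assoc]
    · rw [hfox i hi, mul_zero, map_zero]
      exact M.zero_mem
  obtain ⟨g, hg, hgr⟩ := Subgroup.mem_map.1 (show foxC π σ hσ 1 r ∈
    (N.subgroupOf π.ker).map Abelianization.of from h2)
  obtain ⟨l, hl, hlg⟩ := Subgroup.mem_subgroupOf.1 hg
  refine ⟨l, hl, ?_⟩
  rw [hlg]
  have h4 : foxC π σ hσ 1 r = Abelianization.of ⟨r, hr⟩ := by
    unfold foxC
    congr 1
    apply Subtype.ext
    simp [hσ1, MonoidHom.mem_ker.1 hr]
  have h5 : (⟨r, hr⟩ : π.ker)⁻¹ * g ∈ (Abelianization.of (G := π.ker)).ker := by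
    rw [MonoidHom.mem_ker, map_mul, map_inv, hgr, h4, inv_mul_cancel]
  rw [Abelianization.ker_of] at h5
  rw [← Subgroup.map_subtype_commutator]
  exact ⟨_, h5, rfl⟩

end FoxGeneral

/-- Let `G = ⟨x, y | x y² x⁻¹ = y³⟩`, `H` the normal closure of `y⁴` in `G`,
`F` the free group on `z_i (i ∈ ℤ)` and `π′ : F → H` the epimorphism
`z_i ↦ x^i y⁴ x^{-i}`, with kernel `R = ker π′`.  Let `∂/∂z_i : F → ℤH` be the
Fox derivatives (`∂z_j/∂z_i = δ_{ij}` and `∂(uv)/∂z_i = ∂u/∂z_i +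
π′(u)·∂v/∂z_i`).  If `r ∈ R` has `∂r/∂z_i = 0` for all `i ∉ {0, 1, …, n}`,
then there are finitely many `s₁, …, s_m ∈ R`, each a word in the letters
`z₀, …, z_n`, and `f₁, …, f_m ∈ F`, with
`r ≡ (f₁ s₁ f₁⁻¹)(f₂ s₂ f₂⁻¹) ⋯ (f_m s_m f_m⁻¹)  mod [R,R]`. -/
theorem fox_derivative_support_lemma
    (π' : FreeGroup ℤ →* ↥bsH)
    (hπ' : ∀ i : ℤ, ((π' (FreeGroup.of i) : ↥bsH) : BSGroup) =
      bsX ^ i * bsY ^ 4 * bsX ^ (-i))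
    (hsurj : Function.Surjective π')
    (D : ℤ → FreeGroup ℤ → MonoidAlgebra ℤ ↥bsH)
    (hD1 : ∀ i j : ℤ, D i (FreeGroup.of j) = if j = i then 1 else 0)
    (hD2 : ∀ (i : ℤ) (u v : FreeGroup ℤ),
      D i (u * v) = D i u + MonoidAlgebra.of ℤ ↥bsH (π' u) * D i v)
    (r : FreeGroup ℤ) (hr : r ∈ π'.ker) (n : ℕ)
    (hfox : ∀ i : ℤ, i ∉ Set.Icc (0 : ℤ) (n : ℤ) → D i r = 0) :
    ∃ l : List (FreeGroup ℤ × FreeGroup ℤ),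
      (∀ p ∈ l, p.2 ∈ π'.ker ∧
        p.2 ∈ Subgroup.closure (FreeGroup.of '' Set.Icc (0 : ℤ) (n : ℤ))) ∧
      r⁻¹ * (l.map fun p => p.1 * p.2 * p.1⁻¹).prod ∈ ⁅π'.ker, π'.ker⁆ := by
  exact fox_general π' hsurj D hD1 hD2 (Set.Icc (0 : ℤ) (n : ℤ)) r hr hfox
end

section
/- Let G be a group generated by a family x, with π : F(x) → G the induced epimorphism from the free group on x, and let g ∈ G be any element. Extend π to an epimorphism π̂ : F(x ⊔ {y}) → G from the free group on the enlarged family by setting π̂(y) = g. Then there is a ℤG-module isomorphism M(G, x ∪ {y}) ≅ M(G, x) ⊕ ℤG between the corresponding relation modules. -/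
theorem rmod_fox {β : Type} {G : Type} [Group G] (p : FreeGroup β →* G)
    (δ : β → MonoidAlgebra ℤ G) :
    ∃ d : FreeGroup β → MonoidAlgebra ℤ G, (∀ b, d (FreeGroup.of b) = δ b) ∧
      ∀ u v, d (u * v) = d u + MonoidAlgebra.of ℤ G (p u) * d v := by
  let A := MonoidAlgebra ℤ G
  let o := MonoidAlgebra.of ℤ G
  let L : FreeGroup β →* Equiv.Perm A := FreeGroup.lift fun b =>
    { toFun := fun x => δ b + o (p (FreeGroup.of b)) * x
      invFun := fun x => o (p (FreeGroup.of b))⁻¹ * (x - δ b)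
      left_inv := fun x => by
        simp only [add_sub_cancel_left, ← mul_assoc, ← map_mul, inv_mul_cancel, map_one, one_mul]
      right_inv := fun x => by
        simp only [← mul_assoc, ← map_mul, mul_inv_cancel, map_one, one_mul]
        abel }
  have key : ∀ (u : FreeGroup β) (x : A), L u x = L u 0 + o (p u) * x := by
    intro u
    induction u using FreeGroup.induction_on with
    | C1 => intro x; simp
    | of b => intro x; simp [L]
    | inv_of b ih =>
      intro x
      rw [map_inv, Equiv.Perm.inv_eq_iff_eq, ih, mul_add, ← mul_assoc, ← map_mul, ← map_mul,
        mul_inv_cancel, map_one, map_one, one_mul, ← add_assoc, ← ih, ← Equiv.Perm.mul_apply,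
        mul_inv_cancel]
      simp
    | mul u v hu hv =>
      intro x
      rw [map_mul, Equiv.Perm.mul_apply, Equiv.Perm.mul_apply, hv, hu, hu (L v 0), map_mul,
        map_mul, mul_add, mul_assoc, add_assoc]
  refine ⟨fun u => L u 0, fun b => by simp [L], fun u v => ?_⟩
  change L (u * v) 0 = L u 0 + o (p u) * L v 0
  rw [map_mul, Equiv.Perm.mul_apply, key]

theorem rmod_linear {G : Type} [Group G] {M N : Type} [AddCommGroup M] [AddCommGroup N]
    [Module (MonoidAlgebra ℤ G) M] [Module (MonoidAlgebra ℤ G) N] (f : M →+ N)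
    (h : ∀ (g : G) (m : M), f (MonoidAlgebra.of ℤ G g • m) = MonoidAlgebra.of ℤ G g • f m)
    (a : MonoidAlgebra ℤ G) (m : M) : f (a • m) = a • f m := by
  induction a using MonoidAlgebra.induction_on with
  | of g => exact h g m
  | add a b ha hb => rw [add_smul, add_smul, map_add, ha, hb]
  | smul r a ha => rw [smul_assoc, smul_assoc, map_zsmul, ha]

/-- Let `G` be generated by a family `x` via `π : F(x) → G`, let `g ∈ G`, and
extend to `π̂ : F(x ⊔ {y}) → G` with `π̂(y) = g`.  Then there is a
`ℤG`-isomorphism `M(G, x ∪ {y}) ≅ M(G, x) ⊕ ℤG` of relation modules (where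
`M(G,x) = ker π / [ker π, ker π]` with `G` acting by conjugation). -/
theorem relationModule_add_redundant_generator
    {α : Type} {G : Type} [Group G]
    (π : FreeGroup α →* G) (hπ : Function.Surjective π) (g : G)
    (πhat : FreeGroup (α ⊕ Unit) →* G)
    (hπhat : ∀ a : α, πhat (FreeGroup.of (Sum.inl a)) = π (FreeGroup.of a))
    (hπhaty : πhat (FreeGroup.of (Sum.inr ())) = g)
    [Module (MonoidAlgebra ℤ G) (Additive (Abelianization ↥π.ker))]
    (hact : ∀ (f : FreeGroup α) (r r' : ↥π.ker), (r' : FreeGroup α) = f * ↑r * f⁻¹ →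
      MonoidAlgebra.of ℤ G (π f) • Additive.ofMul (Abelianization.of r) =
        Additive.ofMul (Abelianization.of r'))
    [Module (MonoidAlgebra ℤ G) (Additive (Abelianization ↥πhat.ker))]
    (hacthat : ∀ (f : FreeGroup (α ⊕ Unit)) (r r' : ↥πhat.ker),
      (r' : FreeGroup (α ⊕ Unit)) = f * ↑r * f⁻¹ →
      MonoidAlgebra.of ℤ G (πhat f) • Additive.ofMul (Abelianization.of r) =
        Additive.ofMul (Abelianization.of r')) :
    Nonempty (Additive (Abelianization ↥πhat.ker) ≃ₗ[MonoidAlgebra ℤ G]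
      (Additive (Abelianization ↥π.ker) × MonoidAlgebra ℤ G)) := by
  classical
  obtain ⟨w, hw⟩ := hπ g
  let s : FreeGroup α →* FreeGroup (α ⊕ Unit) := FreeGroup.map Sum.inl
  let ρ : FreeGroup (α ⊕ Unit) →* FreeGroup α :=
    FreeGroup.lift (Sum.elim FreeGroup.of fun _ => w)
  have hρs : ∀ f, ρ (s f) = f := by
    intro f
    have : ρ.comp s = MonoidHom.id _ := by ext; simp [ρ, s]
    exact DFunLike.congr_fun this f
  have hs : ∀ f, πhat (s f) = π f := by
    intro f
    have : πhat.comp s = π := by ext; simp [s, hπhat]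
    exact DFunLike.congr_fun this f
  have hρ : ∀ f, π (ρ f) = πhat f := by
    intro f
    have : π.comp ρ = πhat := by
      ext b
      rcases b with a | u
      · simp [ρ, hπhat]
      · cases u; simp [ρ, hw, hπhaty]
    exact DFunLike.congr_fun this f
  obtain ⟨d, hd, hdm⟩ := rmod_fox πhat (Sum.elim (fun _ => 0) fun _ => 1)
  have hd1 : d 1 = 0 := by
    have := hdm 1 1
    rw [map_one, map_one, one_mul, one_mul] at this
    exact left_eq_add.mp this
  have hdinv : ∀ u, d u⁻¹ = - (MonoidAlgebra.of ℤ G (πhat u⁻¹) * d u) := by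
    intro u
    have := hdm u⁻¹ u
    rw [inv_mul_cancel, hd1] at this
    exact eq_neg_of_add_eq_zero_left this.symm
  have hds : ∀ f, d (s f) = 0 := by
    intro f
    induction f using FreeGroup.induction_on with
    | C1 => simpa using hd1
    | of a => simp [s, hd]
    | inv_of a ih => rw [map_inv, hdinv, ih, mul_zero, neg_zero]
    | mul u v hu hv => rw [map_mul, hdm, hu, hv, mul_zero, add_zero]
  -- maps on kernels
  let ρK : πhat.ker →* π.ker := (ρ.comp πhat.ker.subtype).codRestrict π.ker fun r => by
    have := r.2
    rw [MonoidHom.mem_ker] at this ⊢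
    simpa [hρ] using this
  let sK : π.ker →* πhat.ker := (s.comp π.ker.subtype).codRestrict πhat.ker fun r => by
    have := r.2
    rw [MonoidHom.mem_ker] at this ⊢
    simpa [hs] using this
  let dK : πhat.ker →* Multiplicative (MonoidAlgebra ℤ G) :=
    { toFun := fun r => Multiplicative.ofAdd (d r)
      map_one' := by simp [hd1]
      map_mul' := fun r t => by
        have := r.2
        rw [MonoidHom.mem_ker] at this
        rw [Subgroup.coe_mul, hdm, this, map_one, one_mul, ofAdd_add] }
  let ρM : Additive (Abelianization πhat.ker) →+ Additive (Abelianization π.ker) :=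
    MonoidHom.toAdditive (Abelianization.map ρK)
  let sM : Additive (Abelianization π.ker) →+ Additive (Abelianization πhat.ker) :=
    MonoidHom.toAdditive (Abelianization.map sK)
  let dM : Additive (Abelianization πhat.ker) →+ MonoidAlgebra ℤ G :=
    MonoidHom.toAdditiveLeft (Abelianization.lift dK)
  have hρM : ∀ r, ρM (Additive.ofMul (Abelianization.of r)) =
      Additive.ofMul (Abelianization.of (ρK r)) := fun r => rfl
  have hsM : ∀ r, sM (Additive.ofMul (Abelianization.of r)) =
      Additive.ofMul (Abelianization.of (sK r)) := fun r => rfl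
  have hdM : ∀ r, dM (Additive.ofMul (Abelianization.of r)) = d r := fun r => rfl
  have surjh : ∀ m : Additive (Abelianization πhat.ker), ∃ r,
      m = Additive.ofMul (Abelianization.of r) := by
    intro m
    obtain ⟨r, hr⟩ := QuotientGroup.mk_surjective (Additive.toMul m)
    exact ⟨r, (congrArg Additive.ofMul hr).symm⟩
  have surj : ∀ m : Additive (Abelianization π.ker), ∃ r,
      m = Additive.ofMul (Abelianization.of r) := by
    intro m
    obtain ⟨r, hr⟩ := QuotientGroup.mk_surjective (Additive.toMul m)
    exact ⟨r, (congrArg Additive.ofMul hr).symm⟩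
  have conjmem : ∀ (f : FreeGroup (α ⊕ Unit)) (r : πhat.ker),
      f * (r : FreeGroup (α ⊕ Unit)) * f⁻¹ ∈ πhat.ker :=
    fun f r => (inferInstance : πhat.ker.Normal).conj_mem _ r.2 f
  have hρlin : ∀ (h : G) (m), ρM (MonoidAlgebra.of ℤ G h • m) =
      MonoidAlgebra.of ℤ G h • ρM m := by
    intro h m
    obtain ⟨f₀, rfl⟩ := hπ h
    obtain ⟨r, rfl⟩ := surjh m
    have e1 := hacthat (s f₀) r ⟨_, conjmem (s f₀) r⟩ rfl
    rw [hs] at e1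
    rw [e1, hρM, hρM, hact f₀ (ρK r) (ρK ⟨_, conjmem (s f₀) r⟩)]
    simp [ρK, hρs]
  have hdlin : ∀ (h : G) (m), dM (MonoidAlgebra.of ℤ G h • m) =
      MonoidAlgebra.of ℤ G h • dM m := by
    intro h m
    obtain ⟨f₀, rfl⟩ := hπ h
    obtain ⟨r, rfl⟩ := surjh m
    have e1 := hacthat (s f₀) r ⟨_, conjmem (s f₀) r⟩ rfl
    rw [hs] at e1
    rw [e1, hdM, hdM]
    change d (s f₀ * r * (s f₀)⁻¹) = _
    rw [hdm, hdm, ← map_inv, hds, hds, hs, mul_zero, add_zero, zero_add, smul_eq_mul]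
  have Dmem : ∀ f, f * (s (ρ f))⁻¹ ∈ πhat.ker := by
    intro f
    rw [MonoidHom.mem_ker, map_mul, map_inv, hs, hρ, mul_inv_cancel]
  let D : FreeGroup (α ⊕ Unit) → Additive (Abelianization πhat.ker) := fun f =>
    Additive.ofMul (Abelianization.of ⟨_, Dmem f⟩)
  have hDm : ∀ u v, D (u * v) = D u + MonoidAlgebra.of ℤ G (πhat u) • D v := by
    intro u v
    have e1 := hacthat u ⟨_, Dmem v⟩ ⟨_, conjmem u ⟨_, Dmem v⟩⟩ rfl
    simp only [D]
    rw [e1, add_comm, ← ofMul_mul, ← map_mul]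
    congr 2
    ext1
    simp [mul_assoc]
  have hD1 : D 1 = 0 := by
    have := hDm 1 1
    rw [map_one, map_one, one_smul, mul_one] at this
    exact left_eq_add.mp this
  have hDinv : ∀ u, D u⁻¹ = - (MonoidAlgebra.of ℤ G (πhat u⁻¹) • D u) := by
    intro u
    have := hDm u⁻¹ u
    rw [inv_mul_cancel, hD1] at this
    exact eq_neg_of_add_eq_zero_left this.symm
  let y : FreeGroup (α ⊕ Unit) := FreeGroup.of (Sum.inr ())
  have hDd : ∀ f, D f = d f • D y := by
    intro f
    induction f using FreeGroup.induction_on with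
    | C1 => rw [hD1, hd1, zero_smul]
    | of b =>
      rcases b with a | u
      · rw [hd, Sum.elim_inl, zero_smul]
        have : (⟨_, Dmem (FreeGroup.of (Sum.inl a))⟩ : πhat.ker) = 1 := by
          ext1
          simp [ρ, s]
        simp only [D]
        rw [this, map_one, ofMul_one]
      · cases u
        rw [hd, Sum.elim_inr, one_smul]
    | inv_of b ih => rw [hDinv, hdinv, ih, neg_smul, mul_smul]
    | mul u v hu hv => rw [hDm, hdm, hu, hv, add_smul, mul_smul]
  have hρD : ρM (D y) = 0 := by
    simp only [D]
    rw [hρM]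
    have : ρK ⟨_, Dmem y⟩ = 1 := by
      ext1
      simp [ρK, hρs]
    rw [this, map_one, ofMul_one]
  have hdD : dM (D y) = 1 := by
    simp only [D]
    rw [hdM]
    change d (y * (s (ρ y))⁻¹) = 1
    rw [hdm, ← map_inv, hds, mul_zero, add_zero, hd, Sum.elim_inr]
  refine ⟨{ toFun := fun m => (ρM m, dM m)
            map_add' := fun a b => by simp
            map_smul' := fun a m => by
              simp only [rmod_linear ρM hρlin, rmod_linear dM hdlin, RingHom.id_apply, Prod.smul_mk]
            invFun := fun q => q.2 • D y + sM q.1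
            left_inv := fun m => ?_
            right_inv := fun q => ?_ }⟩
  · obtain ⟨r, rfl⟩ := surjh m
    change dM _ • D y + sM (ρM _) = _
    rw [hdM, ← hDd, hρM, hsM]
    simp only [D]
    rw [← ofMul_mul, ← map_mul]
    congr 2
    ext1
    simp [sK, ρK]
  · obtain ⟨m, a⟩ := q
    obtain ⟨r, rfl⟩ := surj m
    have e1 : ρK (sK r) = r := by
      ext1
      simp [sK, ρK, hρs]
    have e2 : d (sK r) = 0 := hds r
    simp only [map_add, rmod_linear ρM hρlin, rmod_linear dM hdlin, hρD, hdD, hsM, hρM, hdM,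
      e1, e2, smul_zero, zero_add, add_zero, smul_eq_mul, mul_one]
end
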